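/- arXiv:math/0310156 — 2 statements merged into one kernel-verified Lean document; each statement's English description precedes it below -/
import Mathlib

section
/- Let Γ be an n-crystallographic group and let G be a subgroup of Γ. Then G is virtually infinite cyclic if and only if there is at least one line l in ℝⁿ that is left invariant by G (i.e. gl = l for all g ∈ G) and the action of G on l is cocompact (i.e. the quotient l/G is compact). -/
noncomputable section

/-- Euclidean `n`-space. -/
abbrev E (n : ℕ) := EuclideanSpace ℝ (Fin n)

/-- The isometry group of Euclidean `n`-space (which equals `O(n) ⋉ ℝⁿ`). -/
abbrev Isom (n : ℕ) := E n ≃ᵢ E n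

/-- A subgroup of the isometry group of `ℝⁿ` is `n`-crystallographic if its action on `ℝⁿ`
is properly discontinuous and cocompact. -/
def IsCrystallographic {n : ℕ} (Γ : Subgroup (Isom n)) : Prop :=
  (∀ K L : Set (E n), IsCompact K → IsCompact L →
      {γ : Isom n | γ ∈ Γ ∧ (γ '' K ∩ L).Nonempty}.Finite) ∧
  ∃ K : Set (E n), IsCompact K ∧ ∀ x : E n, ∃ γ ∈ Γ, γ x ∈ K

/-- A line in `ℝⁿ`: a one-dimensional affine subspace. -/
def IsLine {n : ℕ} (l : Set (E n)) : Prop :=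
  ∃ p v : E n, v ≠ 0 ∧ l = {x | ∃ t : ℝ, x = p + t • v}

/-- A group is virtually infinite cyclic if it contains an infinite cyclic subgroup of
finite index. -/
def IsVirtuallyInfiniteCyclic (G : Type*) [Group G] : Prop :=
  ∃ H : Subgroup G, H.FiniteIndex ∧ Nonempty (H ≃* Multiplicative ℤ)

/-- The linear part of an isometry of Euclidean space. -/
def Isom.linearPart {n : ℕ} (g : Isom n) : E n ≃ₗᵢ[ℝ] E n :=
  g.toRealAffineIsometryEquiv.linearIsometryEquiv

lemma Isom.apply_add {n : ℕ} (g : Isom n) (x y : E n) :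
    g (x + y) = g x + g.linearPart y := by
  have h := g.toRealAffineIsometryEquiv.map_vadd x y
  change g (y + x) = g.linearPart y + g x at h
  rw [add_comm x y, h, add_comm]

lemma Isom.linearPart_sub {n : ℕ} (g : Isom n) (x y : E n) :
    g.linearPart (x - y) = g x - g y := by
  have h := g.apply_add y (x - y)
  rw [add_sub_cancel] at h
  rw [h, add_sub_cancel_left]

lemma Isom.apply_add_smul {n : ℕ} (g : Isom n) (x v : E n) (t : ℝ) :
    g (x + t • v) = g x + t • g.linearPart v := by
  rw [g.apply_add, map_smul]

/-- Every isometry translates some point by a vector fixed by the linear part. -/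
lemma Isom.exists_axis {n : ℕ} (h : Isom n) :
    ∃ p v : E n, h p = p + v ∧ h.linearPart v = v := by
  set L := h.linearPart
  set S : Submodule ℝ (E n) :=
    LinearMap.range (L.toLinearEquiv.toLinearMap - LinearMap.id)
  obtain ⟨s, hs, w, hw, hb⟩ := S.exists_add_mem_mem_orthogonal (h 0)
  obtain ⟨q, rfl⟩ := hs
  have hLw : L w = w := by
    have hin : inner ℝ (L w - w) w = 0 := (Submodule.mem_orthogonal S w).1 hw _ ⟨w, rfl⟩
    have hn : ‖L w‖ = ‖w‖ := L.norm_map w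
    rw [inner_sub_left, real_inner_self_eq_norm_sq] at hin
    have : ‖L w - w‖ ^ 2 = 0 := by
      rw [norm_sub_sq_real, hn]; linarith
    exact sub_eq_zero.1 (norm_eq_zero.1 (pow_eq_zero_iff two_ne_zero |>.1 this))
  refine ⟨-q, w, ?_, hLw⟩
  have h1 := h.apply_add 0 (-q)
  rw [zero_add, map_neg h.linearPart, hb] at h1
  rw [h1]
  simp only [LinearMap.sub_apply, LinearMap.id_apply]
  change L q - q + w + -L q = -q + w
  abel

/-- A translation along a line acts through its integer powers by multiples. -/
lemma Isom.zpow_apply_of_translation {n : ℕ} {h : Isom n} {p v : E n} {s : ℝ}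
    (hs : ∀ t : ℝ, h (p + t • v) = p + (t + s) • v) (k : ℤ) (t : ℝ) :
    (h ^ k) (p + t • v) = p + (t + k * s) • v := by
  induction k generalizing t with
  | zero => simp
  | succ k ih =>
    rw [zpow_add_one, IsometryEquiv.mul_apply, hs, ih]
    congr 2; push_cast; ring
  | pred k ih =>
    have hinv : h⁻¹ (p + t • v) = p + (t - s) • v := by
      apply h.injective
      rw [IsometryEquiv.apply_inv_self, hs, sub_add_cancel]
    rw [zpow_sub_one, IsometryEquiv.mul_apply, hinv, ih]
    congr 2; push_cast; ring

/-- The points `p + t • v` with `|t| ≤ r`. -/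
def lineSegment {n : ℕ} (p v : E n) (r : ℝ) : Set (E n) :=
  (fun t : ℝ => p + t • v) '' Set.Icc (-r) r

lemma isCompact_lineSegment {n : ℕ} (p v : E n) (r : ℝ) : IsCompact (lineSegment p v r) :=
  isCompact_Icc.image (by fun_prop)

lemma Isom.exists_zpow_mem_lineSegment {n : ℕ} {h : Isom n} {p v : E n} {s : ℝ} (hs0 : s ≠ 0)
    (hs : ∀ t : ℝ, h (p + t • v) = p + (t + s) • v) (t : ℝ) :
    ∃ k : ℤ, (h ^ k) (p + t • v) ∈ lineSegment p v |s| := by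
  refine ⟨-round (t / s), t + (-round (t / s) : ℤ) * s, ?_, ?_⟩
  · rw [Set.mem_Icc, ← abs_le]
    have h1 := abs_sub_round (t / s)
    have h2 : t + (-round (t / s) : ℤ) * s = (t / s - round (t / s)) * s := by
      push_cast; field_simp; ring
    rw [h2, abs_mul]
    nlinarith [abs_nonneg s]
  · exact (Isom.zpow_apply_of_translation hs _ t).symm

/-- A translation along a line fixes no point, so its powers are pairwise distinct. -/
lemma Isom.zpow_injective_of_translation {n : ℕ} {h : Isom n} {p v : E n} {s : ℝ}
    (hs0 : s ≠ 0) (hv : v ≠ 0) (hs : ∀ t : ℝ, h (p + t • v) = p + (t + s) • v) :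
    Function.Injective fun k : ℤ => h ^ k := by
  intro a b hab
  have h1 := congrArg (fun f : Isom n => f (p + (0 : ℝ) • v)) hab
  simp only [Isom.zpow_apply_of_translation hs, add_right_inj] at h1
  have h2 := smul_left_injective ℝ hv h1
  simpa [hs0] using h2

/-- In a properly discontinuous group, an element of infinite order has no fixed point. -/
lemma IsCrystallographic.apply_ne {n : ℕ} {Γ : Subgroup (Isom n)} (hΓ : IsCrystallographic Γ)
    {h : Isom n} (hh : h ∈ Γ) (hinj : Function.Injective fun k : ℤ => h ^ k) (x : E n) :
    h x ≠ x := by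
  intro hx
  have hk (k : ℤ) : (h ^ k) x = x := by
    have := Isom.zpow_apply_of_translation (h := h) (p := x) (v := 0) (s := 0)
      (by simp [hx]) k 0
    simpa using this
  refine (Set.infinite_range_of_injective hinj)
    ((hΓ.1 {x} {x} isCompact_singleton isCompact_singleton).subset ?_)
  rintro _ ⟨k, rfl⟩
  exact ⟨zpow_mem hh k, x, ⟨x, rfl, hk k⟩, rfl⟩

/-- An isometry preserving a line acts on it as a translation or as a reflection. -/
lemma Isom.exists_apply_line {n : ℕ} {g : Isom n} {p v : E n} (hv : v ≠ 0)
    (hg : g '' {x | ∃ t : ℝ, x = p + t • v} = {x | ∃ t : ℝ, x = p + t • v}) :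
    ∃ ε c : ℝ, (ε = 1 ∨ ε = -1) ∧ ∀ t : ℝ, g (p + t • v) = p + (ε * t + c) • v := by
  have hmem (t : ℝ) : ∃ u : ℝ, g (p + t • v) = p + u • v :=
    hg.subset ⟨_, ⟨t, rfl⟩, rfl⟩
  obtain ⟨c, hc⟩ := hmem 0
  obtain ⟨d, hd⟩ := hmem 1
  rw [zero_smul, add_zero] at hc
  have hL : g.linearPart v = (d - c) • v := by
    have h1 := g.apply_add_smul p v 1
    rw [hd, hc, one_smul, add_assoc, add_right_inj] at h1
    rw [sub_smul, h1, add_sub_cancel_left]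
  refine ⟨d - c, c, ?_, fun t => ?_⟩
  · have h1 := g.linearPart.norm_map v
    rw [hL, norm_smul, Real.norm_eq_abs] at h1
    exact eq_or_eq_neg_of_abs_eq (mul_right_cancel₀ (norm_ne_zero_iff.2 hv) (by rw [h1, one_mul]))
  · rw [g.apply_add_smul, hc, hL, smul_smul, add_assoc, ← add_smul]
    congr 2; ring

/-- A group acting cocompactly on a line contains a nontrivial translation of the line. -/
lemma exists_translation_of_cocompact {n : ℕ} {G : Subgroup (Isom n)} {p v : E n} (hv : v ≠ 0)
    (hl : ∀ γ ∈ G, γ '' {x | ∃ t : ℝ, x = p + t • v} = {x | ∃ t : ℝ, x = p + t • v})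
    {K : Set (E n)} (hK : IsCompact K)
    (hco : ∀ x ∈ {x | ∃ t : ℝ, x = p + t • v}, ∃ γ ∈ G, γ x ∈ K) :
    ∃ g ∈ G, ∃ s : ℝ, s ≠ 0 ∧ ∀ t : ℝ, g (p + t • v) = p + (t + s) • v := by
  obtain ⟨R, hR⟩ := hK.isBounded.subset_closedBall p
  have hv' : 0 < ‖v‖ := norm_pos_iff.2 hv
  have hb (t : ℝ) (ht : p + t • v ∈ K) : |t| ≤ R / ‖v‖ := by
    have := hR ht
    rw [mem_closedBall_iff_norm, add_sub_cancel_left, norm_smul, Real.norm_eq_abs] at this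
    rwa [le_div_iff₀ hv']
  set r := R / ‖v‖
  have key (t : ℝ) : ∃ g ∈ G, ∃ ε c : ℝ, (ε = 1 ∨ ε = -1) ∧ |ε * t + c| ≤ r ∧
      ∀ t : ℝ, g (p + t • v) = p + (ε * t + c) • v := by
    obtain ⟨g, hg, hgK⟩ := hco _ ⟨t, rfl⟩
    obtain ⟨ε, c, hε, h⟩ := Isom.exists_apply_line hv (hl g hg)
    rw [h] at hgK
    exact ⟨g, hg, ε, c, hε, hb _ hgK, h⟩
  have hr : 0 ≤ r := by
    obtain ⟨_, _, _, _, _, hle, _⟩ := key 0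
    exact (abs_nonneg _).trans hle
  obtain ⟨g, hg, ε, c, hε, hc, hgt⟩ := key (r + 1)
  obtain ⟨g', hg', ε', c', hε', hc', hgt'⟩ := key (3 * r + 2)
  rw [abs_le] at hc hc'
  rcases hε with rfl | rfl
  · exact ⟨g, hg, c, by rintro rfl; linarith, fun t => by rw [hgt, one_mul]⟩
  rcases hε' with rfl | rfl
  · exact ⟨g', hg', c', by rintro rfl; linarith, fun t => by rw [hgt', one_mul]⟩
  refine ⟨g' * g, mul_mem hg' hg, c' - c, fun h => by linarith, fun t => ?_⟩
  rw [IsometryEquiv.mul_apply, hgt, hgt']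
  congr 2; ring

lemma isVirtuallyInfiniteCyclic_of_translation {n : ℕ} {Γ : Subgroup (Isom n)}
    (hΓ : IsCrystallographic Γ) {G : Subgroup (Isom n)} (hG : G ≤ Γ) {p v : E n} (hv : v ≠ 0)
    (hl : ∀ γ ∈ G, γ '' {x | ∃ t : ℝ, x = p + t • v} = {x | ∃ t : ℝ, x = p + t • v})
    {g : Isom n} (hg : g ∈ G) {s : ℝ} (hs0 : s ≠ 0)
    (hs : ∀ t : ℝ, g (p + t • v) = p + (t + s) • v) :
    IsVirtuallyInfiniteCyclic G := by
  set φ : Multiplicative ℤ →* G := zpowersHom G ⟨g, hg⟩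
  have hφ : Function.Injective φ := by
    intro a b hab
    have hab' : g ^ a.toAdd = g ^ b.toAdd := by
      simpa [φ, zpowersHom_apply] using congrArg Subtype.val hab
    exact Multiplicative.toAdd.injective (Isom.zpow_injective_of_translation hs0 hv hs hab')
  refine ⟨φ.range, ?_, ⟨(MonoidHom.ofInjective hφ).symm⟩⟩
  have hfin := hΓ.1 {p} (lineSegment p v |s|) isCompact_singleton (isCompact_lineSegment _ _ _)
  set T : Set G := {γ | (γ : Isom n) p ∈ lineSegment p v |s|}
  have hT : T.Finite := by
    refine Set.Finite.of_finite_image (f := Subtype.val) (hfin.subset ?_)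
      Subtype.val_injective.injOn
    rintro _ ⟨γ, hγ, rfl⟩
    exact ⟨hG γ.2, _, ⟨p, rfl, rfl⟩, hγ⟩
  have := hT.to_subtype
  have hsurj : Function.Surjective fun γ : T => (QuotientGroup.mk (γ : G)⁻¹ : G ⧸ φ.range) := by
    intro x
    obtain ⟨a, rfl⟩ := QuotientGroup.mk_surjective x
    have hp : ((a⁻¹ : G) : Isom n) p ∈ {x | ∃ t : ℝ, x = p + t • v} :=
      (hl _ (a⁻¹).2).subset ⟨p, ⟨0, by simp⟩, rfl⟩
    obtain ⟨t, ht⟩ := hp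
    obtain ⟨k, hk⟩ := Isom.exists_zpow_mem_lineSegment hs0 hs t
    refine ⟨⟨φ (Multiplicative.ofAdd k) * a⁻¹, ?_⟩, ?_⟩
    · rw [← ht] at hk
      exact hk
    · rw [QuotientGroup.eq]
      exact ⟨Multiplicative.ofAdd k, by simp⟩
  have := Finite.of_surjective _ hsurj
  exact Subgroup.finiteIndex_of_finite_quotient

/-- If `g` conjugates a nonzero power of a translation `h` along an axis to a power of `h`, then
its linear part preserves the direction of the axis. -/
lemma Isom.exists_linearPart_eq_smul {n : ℕ} {g h : Isom n} {p v : E n}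
    (hs : ∀ t : ℝ, h (p + t • v) = p + (t + 1) • v) {m : ℕ} (hm : m ≠ 0) {k : ℤ}
    (hconj : (g * h * g⁻¹) ^ m = h ^ k) :
    ∃ c : ℝ, g.linearPart v = c • v := by
  have hpow (j : ℤ) : (h ^ j) p = p + (j : ℝ) • v := by
    simpa using Isom.zpow_apply_of_translation hs j 0
  set w : E n := (m : ℝ) • g.linearPart v - (k : ℝ) • v
  have hbound (N : ℕ) : N * ‖w‖ ≤ 2 * ‖g p - p‖ := by
    have h1 : g * h ^ ((m : ℤ) * N) * g⁻¹ = h ^ (k * N) := by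
      rw [zpow_mul h k, ← hconj, ← zpow_natCast, ← zpow_mul, conj_zpow]
    have h2 := congrArg (fun f : Isom n => f (g p)) h1
    simp only [IsometryEquiv.mul_apply, IsometryEquiv.inv_apply_self] at h2
    rw [hpow, g.apply_add_smul] at h2
    have h3 : ‖(h ^ (k * N : ℤ)) (g p) - (h ^ (k * N : ℤ)) p‖ = ‖g p - p‖ := by
      rw [← dist_eq_norm, ← dist_eq_norm, IsometryEquiv.dist_eq]
    rw [← h2, hpow] at h3
    have h4 : (N : ℝ) • w = (g p + (((m : ℤ) * N : ℤ) : ℝ) • g.linearPart v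
        - (p + ((k * N : ℤ) : ℝ) • v)) - (g p - p) := by
      simp only [w]; push_cast; module
    calc N * ‖w‖ = ‖(N : ℝ) • w‖ := by rw [norm_smul, Real.norm_natCast]
      _ ≤ ‖g p - p‖ + ‖g p - p‖ := by
        rw [h4]
        exact (norm_sub_le _ _).trans_eq (by rw [h3])
      _ = 2 * ‖g p - p‖ := by ring
  have hw : w = 0 := by
    by_contra hw
    obtain ⟨N, hN⟩ := exists_nat_gt (2 * ‖g p - p‖ / ‖w‖)
    rw [div_lt_iff₀ (norm_pos_iff.2 hw)] at hN
    exact (hbound N).not_gt hN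
  refine ⟨k / m, ?_⟩
  have hm' : (m : ℝ) ≠ 0 := Nat.cast_ne_zero.2 hm
  rw [div_eq_inv_mul, mul_smul, ← sub_eq_zero.1 hw, smul_smul, inv_mul_cancel₀ hm', one_smul]

/-- The average of an orbit over the cosets of a finite-index subgroup moving a point only along
`v` spans a line in direction `v` invariant under the whole group. -/
lemma exists_forall_apply_eq_add_smul {n : ℕ} {G : Subgroup (Isom n)} (H : Subgroup G)
    [H.FiniteIndex] {p v : E n} (hH : ∀ h ∈ H, ∃ t : ℝ, (h : Isom n) p = p + t • v)
    (hlin : ∀ g ∈ G, ∃ c : ℝ, g.linearPart v = c • v) :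
    ∃ q : E n, ∀ g ∈ G, ∃ t : ℝ, g q = q + t • v := by
  classical
  have : Fintype (G ⧸ H) := Fintype.ofFinite _
  set f : G ⧸ H → E n := fun i => (i.out : Isom n) p
  set N : ℝ := (Fintype.card (G ⧸ H) : ℝ)
  have hN : N ≠ 0 := Nat.cast_ne_zero.2 Fintype.card_ne_zero
  refine ⟨N⁻¹ • ∑ i, f i, fun g hg => ?_⟩
  have hcoset (i : G ⧸ H) : ∃ t : ℝ, g (f i) = f ((⟨g, hg⟩ : G) • i) + t • v := by
    set a : G := ((⟨g, hg⟩ : G) • i).out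
    have ha : a⁻¹ * (⟨g, hg⟩ * i.out) ∈ H := by
      rw [← QuotientGroup.eq, QuotientGroup.out_eq', ← smul_eq_mul, ← MulAction.Quotient.smul_mk,
        QuotientGroup.out_eq']
    obtain ⟨t, ht⟩ := hH _ ha
    obtain ⟨c, hc⟩ := hlin a a.2
    refine ⟨t * c, ?_⟩
    have h1 : g (f i) = (a : Isom n) (((a⁻¹ * (⟨g, hg⟩ * i.out) : G) : Isom n) p) := by
      simp [f, IsometryEquiv.mul_apply]
    rw [h1, ht, Isom.apply_add_smul, hc, smul_smul]
  choose t ht using hcoset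
  refine ⟨N⁻¹ * ∑ i, t i, ?_⟩
  have hsum : ∑ i, g (f i) = ∑ i, f i + (∑ i, t i) • v := by
    rw [Finset.sum_congr rfl fun i _ => ht i, Finset.sum_add_distrib, Finset.sum_smul]
    congr 1
    exact Equiv.sum_comp (MulAction.toPerm (⟨g, hg⟩ : G)) f
  have hg0 (x : E n) : g x = g 0 + g.linearPart x := by
    simpa using g.apply_add 0 x
  have hsum' : ∑ i, g (f i) = N • g 0 + g.linearPart (∑ i, f i) := by
    rw [Finset.sum_congr rfl fun i _ => hg0 (f i), Finset.sum_add_distrib, map_sum]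
    simp [N, ← Nat.cast_smul_eq_nsmul ℝ]
  have hgq : g (N⁻¹ • ∑ i, f i) = N⁻¹ • ∑ i, g (f i) := by
    rw [hsum', hg0, map_smul, smul_add, smul_smul, inv_mul_cancel₀ hN, one_smul]
  rw [hgq, hsum, smul_add, smul_smul]

/-- Proposition 1.1. Let `Γ` be an `n`-crystallographic group and `G ≤ Γ`.
Then `G` is virtually infinite cyclic iff there is a line `l` in `ℝⁿ` left invariant by `G`
on which the action of `G` is cocompact. -/
theorem virtuallyInfiniteCyclic_iff_invariant_line {n : ℕ}
    (Γ : Subgroup (Isom n)) (hΓ : IsCrystallographic Γ)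
    (G : Subgroup (Isom n)) (hG : G ≤ Γ) :
    IsVirtuallyInfiniteCyclic G ↔
      ∃ l : Set (E n), IsLine l ∧ (∀ γ ∈ G, γ '' l = l) ∧
        ∃ K : Set (E n), IsCompact K ∧ K ⊆ l ∧ ∀ x ∈ l, ∃ γ ∈ G, γ x ∈ K := by
  constructor
  · rintro ⟨H, hfin, ⟨e⟩⟩
    set h : G := (e.symm (Multiplicative.ofAdd 1)).val
    have hpow (k : ℤ) : h ^ k = (e.symm (Multiplicative.ofAdd k)).val := by
      rw [← SubgroupClass.coe_zpow, ← map_zpow, ← ofAdd_zsmul]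
      simp
    have hgen (x : G) (hx : x ∈ H) : ∃ k : ℤ, x = h ^ k :=
      ⟨(e ⟨x, hx⟩).toAdd, by rw [hpow]; simp⟩
    have hinj : Function.Injective fun k : ℤ => (h : Isom n) ^ k := by
      intro a b hab
      have h1 : h ^ a = h ^ b := Subtype.ext (by simpa using hab)
      rw [hpow, hpow] at h1
      exact Multiplicative.ofAdd.injective (e.symm.injective (Subtype.ext h1))
    have hne := hΓ.apply_ne (hG h.2) hinj
    obtain ⟨p, v, hp, hLv⟩ := Isom.exists_axis (h : Isom n)
    have hv : v ≠ 0 := by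
      rintro rfl
      exact hne p (by simpa using hp)
    have htrans (t : ℝ) : (h : Isom n) (p + t • v) = p + (t + 1) • v := by
      rw [Isom.apply_add_smul, hp, hLv]; module
    have hlin (g : Isom n) (hg : g ∈ G) : ∃ c : ℝ, g.linearPart v = c • v := by
      obtain ⟨m, hm, -, hmem⟩ := Subgroup.exists_pow_mem_of_index_ne_zero hfin.index_ne_zero
        ((⟨g, hg⟩ : G) * h * (⟨g, hg⟩ : G)⁻¹)
      obtain ⟨k, hk⟩ := hgen _ hmem
      exact Isom.exists_linearPart_eq_smul htrans hm.ne' (by simpa using congrArg Subtype.val hk)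
    obtain ⟨q, hq⟩ := exists_forall_apply_eq_add_smul H (p := p) (v := v) (fun x hx => by
      obtain ⟨k, rfl⟩ := hgen x hx
      exact ⟨k, by simpa using Isom.zpow_apply_of_translation htrans k 0⟩) hlin
    have hmaps (g : Isom n) (hg : g ∈ G) (t : ℝ) : ∃ u : ℝ, g (q + t • v) = q + u • v := by
      obtain ⟨s, hs⟩ := hq g hg
      obtain ⟨c, hc⟩ := hlin g hg
      exact ⟨s + t * c, by rw [g.apply_add_smul, hs, hc]; module⟩
    obtain ⟨s, hs⟩ := hq h h.2
    have hs0 : s ≠ 0 := by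
      rintro rfl
      exact hne q (by simpa using hs)
    refine ⟨{x | ∃ t : ℝ, x = q + t • v}, ⟨q, v, hv, rfl⟩, fun g hg => ?_,
      lineSegment q v |s|, isCompact_lineSegment _ _ _, ?_, ?_⟩
    · apply Set.Subset.antisymm
      · rintro _ ⟨_, ⟨t, rfl⟩, rfl⟩
        exact hmaps g hg t
      · rintro _ ⟨t, rfl⟩
        exact ⟨g⁻¹ (q + t • v), hmaps _ (inv_mem hg) t, g.apply_inv_self _⟩
    · rintro _ ⟨t, -, rfl⟩
      exact ⟨t, rfl⟩
    · rintro _ ⟨t, rfl⟩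
      obtain ⟨k, hk⟩ := Isom.exists_zpow_mem_lineSegment (h := (h : Isom n)) hs0
        (fun t => by rw [Isom.apply_add_smul, hs, hLv]; module) t
      exact ⟨_, zpow_mem h.2 k, hk⟩
  · rintro ⟨_, ⟨p, v, hv, rfl⟩, hl, K, hK, -, hco⟩
    obtain ⟨g, hg, s, hs0, hs⟩ := exists_translation_of_cocompact hv hl hK hco
    exact isVirtuallyInfiniteCyclic_of_translation hΓ hG hv hl hg hs0 hs
end
end

section
/- Let Γ be a 3-crystallographic group and let G ≤ Γ be a subgroup that leaves invariant a line l in ℝ³ and has a dihedral cocompact action on l (G acts on l by translations and reflections, with some element reversing orientation). Then G is isomorphic to an amalgamated free product G^a *_F G^b (over injective homomorphisms F → G^a, F → G^b of index two), where the triple (F, G^a, G^b) is one of: (1, ℤ₂, ℤ₂); (ℤ₂, ℤ₄, ℤ₄); (ℤ₂, D₂, ℤ₄); (ℤ₂, D₂, D₂); (ℤ₃, ℤ₆, ℤ₆); (ℤ₃, D₃, ℤ₆); (ℤ₃, D₃, D₃); (ℤ₄, ℤ₄×ℤ₂, ℤ₄×ℤ₂); (ℤ₄, D₄, ℤ₄×ℤ₂);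 (ℤ₄, D₄, D₄); (ℤ₆, ℤ₆×ℤ₂, ℤ₆×ℤ₂); (ℤ₆, D₆, ℤ₆×ℤ₂); (ℤ₆, D₆, D₆); (D₂, D₂×ℤ₂, D₂×ℤ₂); (D₂, D₄, D₂×ℤ₂); (D₂, D₄, D₄); (D₃, D₃×ℤ₂, D₃×ℤ₂); (D₄, D₄×ℤ₂, D₄×ℤ₂); (D₆, D₆×ℤ₂, D₆×ℤ₂). -/
noncomputable section

/-- The cyclic group of order `i`. -/
abbrev Zc (i : ℕ) := Multiplicative (ZMod i)

/-- A two-member family of groups, indexed by `Bool`. -/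
def famG (Ga Gb : Type) : Bool → Type := fun i => bif i then Ga else Gb

instance famGGroup (Ga Gb : Type) [Group Ga] [Group Gb] : (i : Bool) → Group (famG Ga Gb i)
  | true => inferInstanceAs (Group Ga)
  | false => inferInstanceAs (Group Gb)

/-- A two-member family of homomorphisms out of `F`, indexed by `Bool`. -/
def famφ {F Ga Gb : Type} [Group F] [Group Ga] [Group Gb]
    (φa : F →* Ga) (φb : F →* Gb) : (i : Bool) → (F →* famG Ga Gb i)
  | true => φa
  | false => φb

/-- `G` is isomorphic to the amalgamated free product `Ga *_F Gb` over injective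
homomorphisms `F → Ga` and `F → Gb` of index two. -/
def IsAmalgam (G : Type*) [Group G] (F Ga Gb : Type) [Group F] [Group Ga] [Group Gb] : Prop :=
  ∃ (φa : F →* Ga) (φb : F →* Gb),
    Function.Injective φa ∧ Function.Injective φb ∧
    φa.range.index = 2 ∧ φb.range.index = 2 ∧
    Nonempty (G ≃* Monoid.PushoutI (famφ φa φb))

theorem mem_sup_zpowers_iff {G : Type*} [Group G] (N : Subgroup G) [N.Normal] {a : G}
    (ha : a * a ∈ N) {g : G} :
    g ∈ N ⊔ Subgroup.zpowers a ↔ g ∈ N ∨ a⁻¹ * g ∈ N := by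
  constructor
  · intro hg
    obtain ⟨n, hn, z, hz, rfl⟩ := Subgroup.mem_sup_of_normal_left.mp hg
    obtain ⟨k, rfl⟩ := Subgroup.mem_zpowers_iff.mp hz
    have h2 : ∀ m : ℤ, (a * a) ^ m ∈ N := fun m => N.zpow_mem ha m
    obtain ⟨m, rfl | rfl⟩ := Int.even_or_odd' k
    · left
      rw [zpow_mul, zpow_two]
      exact N.mul_mem hn (h2 m)
    · right
      have : a⁻¹ * (n * a ^ (2 * m + 1)) = (a⁻¹ * n * a⁻¹⁻¹) * (a * a) ^ m := by
        rw [← zpow_two, ← zpow_mul, show 2 * m + 1 = 1 + 2 * m by ring, zpow_add]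
        simp [mul_assoc]
      rw [this]
      exact N.mul_mem (Subgroup.Normal.conj_mem inferInstance n hn a⁻¹) (h2 m)
  · rintro (h | h)
    · exact Subgroup.mem_sup_left h
    · have : g = a * (a⁻¹ * g) := by simp
      rw [this]
      exact Subgroup.mul_mem _ (Subgroup.mem_sup_right (Subgroup.mem_zpowers a))
        (Subgroup.mem_sup_left h)

/-- In a group generated by involutions `x` and `y`, every element is a power of `x * y`,
possibly times `x`. -/
theorem mul_mem_dihedral_form {Q : Type*} [Group Q] {x y : Q} (hx : x * x = 1) (hy : y * y = 1)
    {p q : Q} (hp : ∃ k : ℤ, p = (x * y) ^ k ∨ p = (x * y) ^ k * x)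
    (hq : ∃ k : ℤ, q = (x * y) ^ k ∨ q = (x * y) ^ k * x) :
    ∃ k : ℤ, p * q = (x * y) ^ k ∨ p * q = (x * y) ^ k * x := by
  have hx' : x⁻¹ = x := inv_eq_of_mul_eq_one_left hx
  have hy' : y⁻¹ = y := inv_eq_of_mul_eq_one_left hy
  have hconj : ∀ k : ℤ, x * (x * y) ^ k = (x * y) ^ (-k) * x := by
    intro k
    have h1 : x * (x * y) * x⁻¹ = (x * y)⁻¹ := by
      rw [mul_inv_rev, hy', hx', ← mul_assoc, hx, one_mul]
    have h2 : x * (x * y) ^ k * x⁻¹ = (x * y) ^ (-k) := by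
      rw [← conj_zpow, h1, inv_zpow, zpow_neg]
    rw [← h2]; simp
  obtain ⟨k, hp⟩ := hp
  obtain ⟨l, hq⟩ := hq
  rcases hp with rfl | rfl <;> rcases hq with rfl | rfl
  · exact ⟨k + l, Or.inl (by rw [zpow_add])⟩
  · exact ⟨k + l, Or.inr (by rw [zpow_add, mul_assoc])⟩
  · exact ⟨k - l, Or.inr (by rw [mul_assoc, hconj, sub_eq_add_neg, zpow_add, mul_assoc])⟩
  · refine ⟨k - l, Or.inl ?_⟩
    rw [mul_assoc, ← mul_assoc x, hconj, sub_eq_add_neg, zpow_add, mul_assoc _ x x, hx, mul_one]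

theorem range_index_two {G F A : Type*} [Group G] [Group F] [Group A] (N : Subgroup G) [N.Normal]
    {a : G} (ha : a * a ∈ N) (haN : a ∉ N) (eF : F ≃* N)
    (ea : A ≃* ↥(N ⊔ Subgroup.zpowers a)) :
    ((ea.symm.toMonoidHom.comp (Subgroup.inclusion le_sup_left)).comp
      eF.toMonoidHom).range.index = 2 := by
  have hmem : ∀ x : A, x ∈ ((ea.symm.toMonoidHom.comp (Subgroup.inclusion le_sup_left)).comp
      eF.toMonoidHom).range ↔ (ea x : G) ∈ N := by
    intro x
    constructor
    · rintro ⟨f, rfl⟩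
      simp
    · intro h
      refine ⟨eF.symm ⟨_, h⟩, ?_⟩
      simp only [MonoidHom.comp_apply, MulEquiv.coe_toMonoidHom, MulEquiv.apply_symm_apply]
      rw [MulEquiv.symm_apply_eq]
      rfl
  rw [Subgroup.index_eq_two_iff]
  refine ⟨ea.symm ⟨a, Subgroup.mem_sup_right (Subgroup.mem_zpowers a)⟩, fun x => ?_⟩
  rw [hmem, hmem]
  simp only [map_mul, MulEquiv.apply_symm_apply, Subgroup.coe_mul]
  rcases (mem_sup_zpowers_iff N ha).mp (ea x).2 with h | h
  · right
    refine ⟨h, fun h' => haN ?_⟩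
    simpa using N.mul_mem (N.inv_mem h) h'
  · left
    constructor
    · have : (ea x : G) * a = (a * (a⁻¹ * ea x) * a⁻¹) * (a * a) := by group
      rw [this]
      exact N.mul_mem (Subgroup.Normal.conj_mem inferInstance _ h a) ha
    · intro h'
      apply haN
      have := N.mul_mem h' (N.inv_mem h)
      simpa using this

/-- A group acting on a line as an infinite dihedral group with kernel `N`, generated modulo `N`
by two reflections `a` and `b`, is the amalgamated product of the extensions of `N` by `a` and
`b`. -/
theorem isAmalgam_of_reflections {G : Type*} [Group G] (N : Subgroup G) [N.Normal] {a b : G}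
    (ha : a * a ∈ N) (hb : b * b ∈ N) (hk : ∀ k : ℤ, (a * b) ^ k ∈ N → k = 0)
    (hG : ∀ g : G, ∃ k : ℤ, ((a * b) ^ k)⁻¹ * g ∈ N ∨ ((a * b) ^ k * a)⁻¹ * g ∈ N)
    {F Ga Gb : Type} [Group F] [Group Ga] [Group Gb]
    (hF : Nonempty (F ≃* N)) (hGa : Nonempty (Ga ≃* ↥(N ⊔ Subgroup.zpowers a)))
    (hGb : Nonempty (Gb ≃* ↥(N ⊔ Subgroup.zpowers b))) : IsAmalgam G F Ga Gb := by
  obtain ⟨eF⟩ := hF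
  obtain ⟨ea⟩ := hGa
  obtain ⟨eb⟩ := hGb
  have hq : ∀ x : G, (x : G ⧸ N) = 1 ↔ x ∈ N := fun x => QuotientGroup.eq_one_iff x
  have hqa : (a : G ⧸ N) * a = 1 := by rw [← QuotientGroup.mk_mul, hq]; exact ha
  have hqb : (b : G ⧸ N) * b = 1 := by rw [← QuotientGroup.mk_mul, hq]; exact hb
  have haN : a ∉ N := by
    intro h
    have : (a * b) ^ (2 : ℤ) ∈ N := by
      rw [← hq] at h ⊢
      simp [h, pow_two, hqb]
    exact absurd (hk 2 this) (by norm_num)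
  have hbN : b ∉ N := by
    intro h
    have : (a * b) ^ (2 : ℤ) ∈ N := by
      rw [← hq] at h ⊢
      simp [h, pow_two, hqa]
    exact absurd (hk 2 this) (by norm_num)
  have hka : ∀ k : ℤ, (a * b) ^ k * a ∉ N := by
    intro k h
    have h1 : (((a : G ⧸ N) * b) ^ k) * a = 1 := by
      rw [← hq] at h; simpa using h
    have h2 : (a : G ⧸ N) = (((a : G ⧸ N) * b) ^ k)⁻¹ := eq_inv_of_mul_eq_one_right h1
    have h3 : (a : G ⧸ N) * (a * b) = (a * b) * a := by
      have : Commute (((a : G ⧸ N) * b) ^ k)⁻¹ (a * b) :=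
        ((Commute.refl ((a : G ⧸ N) * b)).zpow_left k).inv_left
      rw [← h2] at this
      exact this
    rw [← mul_assoc, hqa, one_mul] at h3
    have h4 : (a * b) ^ (2 : ℤ) ∈ N := by
      rw [← hq, zpow_two, QuotientGroup.mk_mul, QuotientGroup.mk_mul, ← mul_assoc, ← h3, hqb]
    exact absurd (hk 2 h4) (by norm_num)
  set φa : F →* Ga := (ea.symm.toMonoidHom.comp (Subgroup.inclusion le_sup_left)).comp
    eF.toMonoidHom with hφa
  set φb : F →* Gb := (eb.symm.toMonoidHom.comp (Subgroup.inclusion le_sup_left)).comp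
    eF.toMonoidHom with hφb
  have ia : φa.range.index = 2 := range_index_two N ha haN eF ea
  have ib : φb.range.index = 2 := range_index_two N hb hbN eF eb
  have hea : ∀ f, (ea (φa f) : G) = eF f := fun f => by simp [hφa]
  have heb : ∀ f, (eb (φb f) : G) = eF f := fun f => by simp [hφb]
  refine ⟨φa, φb, ?_, ?_, ia, ib, ?_⟩
  · intro x y h
    have := congrArg (fun z => (ea z : G)) h
    simpa [hea] using this
  · intro x y h
    have := congrArg (fun z => (eb z : G)) h
    simpa [heb] using this
  let fam : (i : Bool) → famG Ga Gb i →* G := fun i => match i with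
    | true => (Subgroup.subtype _).comp ea.toMonoidHom
    | false => (Subgroup.subtype _).comp eb.toMonoidHom
  let ofa : Ga →* Monoid.PushoutI (famφ φa φb) := Monoid.PushoutI.of (φ := famφ φa φb) true
  let ofb : Gb →* Monoid.PushoutI (famφ φa φb) := Monoid.PushoutI.of (φ := famφ φa φb) false
  let base : F →* Monoid.PushoutI (famφ φa φb) := Monoid.PushoutI.base (famφ φa φb)
  have hofa : ∀ f, ofa (φa f) = base f := Monoid.PushoutI.of_apply_eq_base (famφ φa φb) true
  have hofb : ∀ f, ofb (φb f) = base f := Monoid.PushoutI.of_apply_eq_base (famφ φa φb) false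
  let Φ : Monoid.PushoutI (famφ φa φb) →* G :=
    Monoid.PushoutI.lift fam (N.subtype.comp eF.toMonoidHom) (by
      rintro (_ | _)
      · ext f; exact heb f
      · ext f; exact hea f)
  have hΦa : ∀ x, Φ (ofa x) = ea x := fun x => Monoid.PushoutI.lift_of fam _ _ (i := true) x
  have hΦb : ∀ x, Φ (ofb x) = eb x := fun x => Monoid.PushoutI.lift_of fam _ _ (i := false) x
  have hΦF : ∀ x, Φ (base x) = eF x := fun x => Monoid.PushoutI.lift_base fam _ _ x
  have na : φa.range.Normal := Subgroup.normal_of_index_eq_two ia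
  have nb : φb.range.Normal := Subgroup.normal_of_index_eq_two ib
  have conjA : ∀ (g : Ga) (f : F), ofa g * base f * (ofa g)⁻¹ ∈ base.range := by
    intro g f
    obtain ⟨f', hf'⟩ := na.conj_mem (φa f) ⟨f, rfl⟩ g
    exact ⟨f', by rw [← hofa, ← hofa, hf', map_mul, map_mul, map_inv]⟩
  have conjB : ∀ (g : Gb) (f : F), ofb g * base f * (ofb g)⁻¹ ∈ base.range := by
    intro g f
    obtain ⟨f', hf'⟩ := nb.conj_mem (φb f) ⟨f, rfl⟩ g
    exact ⟨f', by rw [← hofb, ← hofb, hf', map_mul, map_mul, map_inv]⟩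
  have hB : base.range.Normal := by
    constructor
    intro n hn p
    induction p using Monoid.PushoutI.induction_on generalizing n with
    | of i g =>
      obtain ⟨f, rfl⟩ := hn
      match i, g with
      | true, g => exact conjA g f
      | false, g => exact conjB g f
    | base h =>
      exact mul_mem (mul_mem ⟨h, rfl⟩ hn) (inv_mem ⟨h, rfl⟩)
    | mul x y hx hy =>
      have := hx _ (hy _ hn)
      simpa [mul_assoc] using this
  let a' : Ga := ea.symm ⟨a, Subgroup.mem_sup_right (Subgroup.mem_zpowers a)⟩
  let b' : Gb := eb.symm ⟨b, Subgroup.mem_sup_right (Subgroup.mem_zpowers b)⟩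
  have ha' : (ea a' : G) = a := by simp [a']
  have hb' : (eb b' : G) = b := by simp [b']
  have memA : ∀ x : Ga, (ea x : G) ∈ N → (ofa x : _ ⧸ base.range) = 1 := by
    intro x h
    rw [QuotientGroup.eq_one_iff]
    refine ⟨eF.symm ⟨_, h⟩, ?_⟩
    rw [← hofa]
    congr 1
    apply ea.injective
    apply Subtype.ext
    rw [hea]; simp
  have memB : ∀ x : Gb, (eb x : G) ∈ N → (ofb x : _ ⧸ base.range) = 1 := by
    intro x h
    rw [QuotientGroup.eq_one_iff]
    refine ⟨eF.symm ⟨_, h⟩, ?_⟩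
    rw [← hofb]
    congr 1
    apply eb.injective
    apply Subtype.ext
    rw [heb]; simp
  set α : _ ⧸ base.range := (ofa a' : _ ⧸ base.range) with hα
  set β : _ ⧸ base.range := (ofb b' : _ ⧸ base.range) with hβ
  have hα2 : α * α = 1 := by
    rw [hα, ← QuotientGroup.mk_mul, ← map_mul]
    exact memA _ (by simpa [ha'] using ha)
  have hβ2 : β * β = 1 := by
    rw [hβ, ← QuotientGroup.mk_mul, ← map_mul]
    exact memB _ (by simpa [hb'] using hb)
  have formA : ∀ g : Ga, ∃ k : ℤ,
      (ofa g : _ ⧸ base.range) = (α * β) ^ k ∨ (ofa g : _ ⧸ base.range) = (α * β) ^ k * α := by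
    intro g
    refine ⟨0, ?_⟩
    rcases (mem_sup_zpowers_iff N ha).mp (ea g).2 with h | h
    · left; simpa using memA g h
    · right
      have := memA (a'⁻¹ * g) (by simpa [ha'] using h)
      rw [map_mul, map_inv, QuotientGroup.mk_mul, QuotientGroup.mk_inv, inv_mul_eq_one] at this
      simpa using this.symm
  have formB : ∀ g : Gb, ∃ k : ℤ,
      (ofb g : _ ⧸ base.range) = (α * β) ^ k ∨ (ofb g : _ ⧸ base.range) = (α * β) ^ k * α := by
    intro g
    rcases (mem_sup_zpowers_iff N hb).mp (eb g).2 with h | h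
    · exact ⟨0, Or.inl (by simpa using memB g h)⟩
    · refine ⟨-1, Or.inr ?_⟩
      have := memB (b'⁻¹ * g) (by simpa [hb'] using h)
      rw [map_mul, map_inv, QuotientGroup.mk_mul, QuotientGroup.mk_inv, inv_mul_eq_one] at this
      rw [← this]
      simpa using (inv_eq_of_mul_eq_one_left hβ2).symm
  have form : ∀ p : Monoid.PushoutI (famφ φa φb), ∃ k : ℤ,
      (p : _ ⧸ base.range) = (α * β) ^ k ∨ (p : _ ⧸ base.range) = (α * β) ^ k * α := by
    intro p
    induction p using Monoid.PushoutI.induction_on with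
    | of i g =>
      match i, g with
      | true, g => exact formA g
      | false, g => exact formB g
    | base h =>
      refine ⟨0, Or.inl ?_⟩
      rw [zpow_zero, QuotientGroup.eq_one_iff]
      exact ⟨h, rfl⟩
    | mul x y hx hy => exact mul_mem_dihedral_form hα2 hβ2 hx hy
  have hΦα : Φ (ofa a') = a := by rw [hΦa, ha']
  have hΦβ : Φ (ofb b') = b := by rw [hΦb, hb']
  have inj : Function.Injective Φ := by
    rw [injective_iff_map_eq_one]
    intro p hp
    obtain ⟨k, h | h⟩ := form p
    · rw [hα, hβ, ← QuotientGroup.mk_mul, ← QuotientGroup.mk_zpow, eq_comm, QuotientGroup.eq] at h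
      obtain ⟨f, hf⟩ := h
      have hp2 : p = (ofa a' * ofb b') ^ k * base f := by rw [hf]; simp
      rw [hp2, map_mul, map_zpow, map_mul, hΦα, hΦβ, hΦF] at hp
      have : (a * b) ^ k ∈ N := by
        rw [eq_inv_of_mul_eq_one_left hp]
        exact N.inv_mem (eF f).2
      have hk0 := hk k this
      subst hk0
      have hf1 : f = 1 := by simpa using hp
      rw [hp2, hf1]; simp
    · exfalso
      rw [hα, hβ, ← QuotientGroup.mk_mul, ← QuotientGroup.mk_zpow, ← QuotientGroup.mk_mul,
        eq_comm, QuotientGroup.eq] at h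
      obtain ⟨f, hf⟩ := h
      have hp2 : p = (ofa a' * ofb b') ^ k * ofa a' * base f := by rw [hf, mul_inv_cancel_left]
      rw [hp2, map_mul, map_mul, map_zpow, map_mul, hΦα, hΦβ, hΦF] at hp
      refine hka k ?_
      rw [eq_inv_of_mul_eq_one_left hp]
      exact N.inv_mem (eF f).2
  have surj : Function.Surjective Φ := by
    intro g
    have hN : ∀ n ∈ N, ∃ f, Φ (base f) = n := fun n hn => ⟨eF.symm ⟨n, hn⟩, by rw [hΦF]; simp⟩
    obtain ⟨k, h | h⟩ := hG g
    · obtain ⟨f, hf⟩ := hN _ h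
      exact ⟨(ofa a' * ofb b') ^ k * base f, by
        rw [map_mul, map_zpow, map_mul, hΦα, hΦβ, hf]; simp⟩
    · obtain ⟨f, hf⟩ := hN _ h
      exact ⟨(ofa a' * ofb b') ^ k * ofa a' * base f, by
        rw [map_mul, map_mul, map_zpow, map_mul, hΦα, hΦβ, hf, mul_inv_cancel_left]⟩
  exact ⟨(MulEquiv.ofBijective Φ ⟨inj, surj⟩).symm⟩

theorem nonempty_mulEquiv_of_range_eq {H G : Type*} [Group H] [Group G] {K : Subgroup G}
    (f : H →* G) (hf : Function.Injective f) (h : f.range = K) : Nonempty (H ≃* K) := by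
  subst h
  exact ⟨MonoidHom.ofInjective hf⟩

theorem nonempty_Zc_mulEquiv_zpowers {G : Type*} [Group G] (r : G) {n : ℕ} (h : orderOf r = n) :
    Nonempty (Zc n ≃* Subgroup.zpowers r) := by
  rw [← Nat.card_zpowers] at h
  subst h
  exact ⟨zmodCyclicMulEquiv inferInstance⟩

theorem nonempty_prod_Zc_two_mulEquiv {H G : Type*} [Group H] [Group G] {M K : Subgroup G} {z : G}
    (hH : Nonempty (H ≃* M)) (hz : z * z = 1) (hzM : z ∉ M) (hcomm : ∀ m ∈ M, Commute m z)
    (hK : ∀ k, k ∈ K ↔ k ∈ M ∨ z⁻¹ * k ∈ M) : Nonempty ((H × Zc 2) ≃* K) := by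
  obtain ⟨e⟩ := hH
  have hz1 : z ≠ 1 := fun h => hzM (h ▸ M.one_mem)
  have hzp : ∀ w ∈ Subgroup.zpowers z, w = 1 ∨ w = z := by
    intro w hw
    obtain ⟨k, rfl⟩ := Subgroup.mem_zpowers_iff.mp hw
    obtain ⟨m, rfl | rfl⟩ := Int.even_or_odd' k
    · left; rw [zpow_mul, zpow_two, hz, one_zpow]
    · right; rw [zpow_add, zpow_mul, zpow_two, hz, one_zpow, one_mul, zpow_one]
  obtain ⟨ez⟩ := nonempty_Zc_mulEquiv_zpowers z (n := 2)
    (orderOf_eq_prime (by rw [pow_two, hz]) hz1)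
  let f : H →* G := M.subtype.comp e.toMonoidHom
  let g : Zc 2 →* G := (Subgroup.zpowers z).subtype.comp ez.toMonoidHom
  have hf : ∀ x, f x ∈ M := fun x => (e x).2
  have hg : ∀ x, g x = 1 ∨ g x = z := fun x => hzp _ (ez x).2
  have hfg : ∀ x y, Commute (f x) (g y) := by
    intro x y
    rcases hg y with h | h <;> rw [h]
    · exact Commute.one_right _
    · exact hcomm _ (hf x)
  refine nonempty_mulEquiv_of_range_eq (f.noncommCoprod g hfg) ?_ ?_
  · rw [injective_iff_map_eq_one]
    rintro ⟨x, y⟩ h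
    simp only [MonoidHom.noncommCoprod_apply] at h
    have hgy : g y = 1 := by
      rcases hg y with h' | h'
      · exact h'
      · rw [h'] at h
        exact absurd (eq_inv_of_mul_eq_one_right h ▸ M.inv_mem (hf x)) hzM
    have hy : y = 1 := by
      apply ez.injective
      apply Subtype.ext
      simpa [g] using hgy
    have hx : x = 1 := by
      apply e.injective
      apply Subtype.ext
      rw [hgy, mul_one] at h
      simpa [f] using h
    rw [hx, hy]; rfl
  · ext k
    rw [hK]
    constructor
    · rintro ⟨⟨x, y⟩, rfl⟩
      simp only [MonoidHom.noncommCoprod_apply]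
      rcases hg y with h | h <;> rw [h]
      · left; simpa using hf x
      · right; rw [(hcomm _ (hf x)).eq]; simpa using hf x
    · rintro (h | h)
      · refine ⟨(e.symm ⟨k, h⟩, 1), ?_⟩
        simp [f]
      · refine ⟨(e.symm ⟨z⁻¹ * k, h⟩, ez.symm ⟨z, Subgroup.mem_zpowers z⟩), ?_⟩
        simp only [MonoidHom.noncommCoprod_apply, f, g, MonoidHom.comp_apply,
          MulEquiv.coe_toMonoidHom, MulEquiv.apply_symm_apply, Subgroup.subtype_apply]
        rw [(hcomm _ h).eq]; simp

theorem nonempty_dihedralGroup_mulEquiv {G : Type*} [Group G] {K : Subgroup G} {r s : G} {n : ℕ}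
    (hr : orderOf r = n) (hs : s * s = 1) (hsr : s ∉ Subgroup.zpowers r)
    (hconj : s * r * s⁻¹ = r⁻¹)
    (hK : ∀ k, k ∈ K ↔ k ∈ Subgroup.zpowers r ∨ s⁻¹ * k ∈ Subgroup.zpowers r) :
    Nonempty (DihedralGroup n ≃* K) := by
  obtain ⟨e⟩ := nonempty_Zc_mulEquiv_zpowers r hr
  have hs' : s⁻¹ = s := inv_eq_of_mul_eq_one_left hs
  have hswap : ∀ w ∈ Subgroup.zpowers r, w * s = s * w⁻¹ := by
    intro w hw
    obtain ⟨k, rfl⟩ := Subgroup.mem_zpowers_iff.mp hw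
    have : s * r ^ k * s⁻¹ = (r ^ k)⁻¹ := by rw [← conj_zpow, hconj, inv_zpow]
    rw [← this, hs', ← mul_assoc, ← mul_assoc, hs, one_mul]
  let f : ZMod n → G := fun i => e (Multiplicative.ofAdd i)
  have hfz : ∀ i, f i ∈ Subgroup.zpowers r := fun i => (e _).2
  have hf0 : f 0 = 1 := by simp [f]
  have hfadd : ∀ i j, f (i + j) = f i * f j := fun i j => by simp [f]
  have hfsub : ∀ i j, f (j - i) = (f i)⁻¹ * f j := fun i j => by
    rw [eq_inv_mul_iff_mul_eq, ← hfadd, add_sub_cancel]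
  have hfinj : ∀ i, f i = 1 → i = 0 := by
    intro i hi
    have h1 : e (Multiplicative.ofAdd i) = 1 := Subtype.ext hi
    simpa using h1
  let φ : DihedralGroup n →* G := MonoidHom.mk'
    (fun d => match d with
      | .r i => f i
      | .sr i => s * f i) (by
    rintro (i | i) (j | j)
    · exact hfadd i j
    · change s * f (j - i) = f i * (s * f j)
      rw [← mul_assoc, hswap _ (hfz i), hfsub, mul_assoc]
    · change s * f (i + j) = s * f i * f j
      rw [hfadd, mul_assoc]
    · change f (j - i) = s * f i * (s * f j)
      rw [mul_assoc, ← mul_assoc (f i), hswap _ (hfz i), hfsub]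
      simp only [← mul_assoc, hs, one_mul])
  refine nonempty_mulEquiv_of_range_eq φ ?_ ?_
  · rw [injective_iff_map_eq_one]
    rintro (i | i) h
    · rw [hfinj i h]; rfl
    · have h' : s * f i = 1 := h
      exact absurd (eq_inv_of_mul_eq_one_left h' ▸ Subgroup.inv_mem _ (hfz i)) hsr
  · ext k
    rw [hK]
    have hsurj : ∀ w ∈ Subgroup.zpowers r, ∃ i, f i = w := fun w hw =>
      ⟨Multiplicative.toAdd (e.symm ⟨w, hw⟩), by simp [f]⟩
    constructor
    · rintro ⟨i | i, rfl⟩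
      · exact Or.inl (hfz i)
      · right
        change s⁻¹ * (s * f i) ∈ _
        simpa using hfz i
    · rintro (h | h)
      · obtain ⟨i, hi⟩ := hsurj _ h
        exact ⟨.r i, hi⟩
      · obtain ⟨i, hi⟩ := hsurj _ h
        refine ⟨.sr i, ?_⟩
        change s * f i = k
        rw [hi]; simp

theorem exists_sq_eq_one_or_sq_eq {G : Type*} [Group G] {r x : G} (hxr : Commute x r) {k : ℤ}
    (hk : x * x = r ^ k) :
    (∃ j : ℤ, (x * r ^ j) * (x * r ^ j) = 1) ∨
      (Even (orderOf r) ∧ ∃ j : ℤ, (x * r ^ j) * (x * r ^ j) = r) := by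
  have hsq : ∀ j : ℤ, (x * r ^ j) * (x * r ^ j) = r ^ (k + 2 * j) := by
    intro j
    rw [mul_assoc, ← mul_assoc (r ^ j), ← (hxr.zpow_right j).eq, mul_assoc x, ← mul_assoc, hk,
      ← zpow_add, ← zpow_add]
    ring_nf
  obtain ⟨m, hm | hm⟩ := Int.even_or_odd' k
  · exact Or.inl ⟨-m, by rw [hsq, hm]; ring_nf; simp⟩
  · rcases Nat.even_or_odd (orderOf r) with h | h
    · exact Or.inr ⟨h, -m, by rw [hsq, hm]; ring_nf; simp⟩
    · obtain ⟨l, hl⟩ := h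
      refine Or.inl ⟨l - m, ?_⟩
      rw [hsq, hm, show (2 * m + 1 + 2 * (l - m) : ℤ) = ((2 * l + 1 : ℕ) : ℤ) by push_cast; ring,
        ← hl, zpow_natCast, pow_orderOf_eq_one]

/-- A homomorphism `ρ` to a group that looks like `O(2)` with rotation subgroup `R`, which is
faithful on the normal subgroup `N` and whose rotations satisfy the crystallographic
restriction. -/
structure IsPlanarPointRep {G O : Type*} [Group G] [Group O] (ρ : G →* O) (R : Subgroup O)
    (N : Subgroup G) : Prop where
  comm : ∀ x ∈ R, ∀ y ∈ R, x * y = y * x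
  sq : ∀ s ∉ R, s * s = 1
  mul_mem_of_notMem : ∀ s ∉ R, ∀ t ∉ R, s * t ∈ R
  order : ∀ g, ρ g ∈ R → orderOf (ρ g) ∈ ({1, 2, 3, 4, 6} : Finset ℕ)
  inj : ∀ n ∈ N, ρ n = 1 → n = 1

namespace IsPlanarPointRep

variable {G O : Type*} [Group G] [Group O] {ρ : G →* O} {R : Subgroup O} {N : Subgroup G}

theorem conj_eq_inv (h : IsPlanarPointRep ρ R N) {s x : G} (hs : ρ s ∉ R) (hx : ρ x ∈ R)
    (hN : s * x * s⁻¹ * x ∈ N) : s * x * s⁻¹ = x⁻¹ := by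
  apply eq_inv_of_mul_eq_one_left
  apply h.inj _ hN
  have h1 : (ρ s)⁻¹ = ρ s := inv_eq_of_mul_eq_one_left (h.sq _ hs)
  have h2 : ρ s * ρ x ∉ R := fun h' => hs ((R.mul_mem_cancel_right hx).mp h')
  simpa [h1, mul_assoc] using h.sq _ h2

theorem commute [N.Normal] (h : IsPlanarPointRep ρ R N) {r x : G} (hr : ρ r ∈ R) (hrN : r ∈ N)
    (hx : ρ x ∈ R) : Commute x r := by
  have : x * r * x⁻¹ * r⁻¹ = 1 := by
    apply h.inj
    · exact N.mul_mem (Subgroup.Normal.conj_mem inferInstance r hrN x) (N.inv_mem hrN)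
    · simp [h.comm _ hx _ hr]
  rw [mul_inv_eq_one, mul_inv_eq_iff_eq_mul] at this
  exact this

theorem orderOf_map (h : IsPlanarPointRep ρ R N) {r : G} (hrN : r ∈ N) :
    orderOf (ρ r) = orderOf r := by
  apply orderOf_eq_orderOf_iff.mpr
  intro n
  rw [← map_pow]
  exact ⟨h.inj _ (N.pow_mem hrN n), fun h => by rw [h, map_one]⟩

theorem orderOf_sqrt (h : IsPlanarPointRep ρ R N) {r x : G} (hrN : r ∈ N)
    (hx : ρ x ∈ R) (hxr : x * x = r) (hev : Even (orderOf r)) :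
    orderOf r = 2 ∧ orderOf x = 4 := by
  have h1 : orderOf r = 2 := by
    have h2 := orderOf_pow' (ρ x) (n := 2) (by norm_num)
    rw [pow_two, ← map_mul, hxr, h.orderOf_map hrN] at h2
    have h3 := h.order x hx
    simp only [Finset.mem_insert, Finset.mem_singleton] at h3
    rcases h3 with h3 | h3 | h3 | h3 | h3 <;> rw [h3] at h2 <;>
      norm_num [-orderOf_eq_one_iff] at h2 <;>
      rw [h2] at hev ⊢ <;> revert hev <;> decide
  refine ⟨h1, ?_⟩
  have h4 : orderOf x = 2 ^ (1 + 1) := by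
    apply orderOf_eq_prime_pow
    · rw [pow_one, pow_two, hxr]
      intro h'
      rw [h', orderOf_one] at h1
      norm_num at h1
    · rw [show 2 ^ (1 + 1) = 2 * 2 by norm_num, pow_mul, pow_two x, hxr, ← h1, pow_orderOf_eq_one]
  simpa using h4

theorem extension_of_cyclic [N.Normal] (h : IsPlanarPointRep ρ R N) {r a : G}
    (hN : N = Subgroup.zpowers r)
    (hr : ρ r ∈ R) (ha : a * a ∈ N) (haN : a ∉ N) {n : ℕ} (hn : orderOf r = n) :
    Nonempty (DihedralGroup n ≃* ↥(N ⊔ Subgroup.zpowers a)) ∨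
    Nonempty ((Zc n × Zc 2) ≃* ↥(N ⊔ Subgroup.zpowers a)) ∨
    (n = 2 ∧ Nonempty (Zc 4 ≃* ↥(N ⊔ Subgroup.zpowers a))) := by
  have hrN : r ∈ N := hN ▸ Subgroup.mem_zpowers r
  have hK := fun k => mem_sup_zpowers_iff N ha (g := k)
  by_cases haR : ρ a ∈ R
  · right
    have hc := h.commute hr hrN haR
    obtain ⟨k, hk⟩ := Subgroup.mem_zpowers_iff.mp (hN ▸ ha)
    have hxN : ∀ j : ℤ, a * r ^ j ∉ N := fun j h' =>
      haN ((N.mul_mem_cancel_right (N.zpow_mem hrN j)).mp h')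
    have hxK : ∀ (j : ℤ) (k : G), k ∈ N ⊔ Subgroup.zpowers a ↔ k ∈ N ∨ (a * r ^ j)⁻¹ * k ∈ N := by
      intro j k
      rw [hK, mul_inv_rev, mul_assoc, N.mul_mem_cancel_left (N.inv_mem (N.zpow_mem hrN j))]
    have hxc : ∀ j : ℤ, Commute r (a * r ^ j) := fun j =>
      (hc.mul_left ((Commute.refl r).zpow_left j)).symm
    rcases exists_sq_eq_one_or_sq_eq hc hk.symm with ⟨j, hj⟩ | ⟨hev, j, hj⟩
    · left
      refine nonempty_prod_Zc_two_mulEquiv (M := N) ?_ hj (hxN j) ?_ (hxK j)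
      · rw [hN]; exact nonempty_Zc_mulEquiv_zpowers r hn
      · intro m hm
        obtain ⟨l, rfl⟩ := Subgroup.mem_zpowers_iff.mp (hN ▸ hm)
        exact (hxc j).zpow_left l
    · right
      have hxR : ρ (a * r ^ j) ∈ R := by
        rw [map_mul, map_zpow]; exact R.mul_mem haR (R.zpow_mem hr j)
      obtain ⟨h2, h4⟩ := h.orderOf_sqrt hrN hxR hj hev
      refine ⟨hn ▸ h2, ?_⟩
      have hKx : N ⊔ Subgroup.zpowers a = Subgroup.zpowers (a * r ^ j) := by
        have hNx : N ≤ Subgroup.zpowers (a * r ^ j) := by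
          rw [hN, Subgroup.zpowers_le]
          have := mul_mem (Subgroup.mem_zpowers (a * r ^ j)) (Subgroup.mem_zpowers (a * r ^ j))
          rwa [hj] at this
        ext k
        rw [hxK j]
        constructor
        · rintro (h' | h')
          · exact hNx h'
          · exact (Subgroup.mul_mem_cancel_left _ (inv_mem (Subgroup.mem_zpowers _))).mp (hNx h')
        · rw [← hxK j]
          intro hk
          refine (Subgroup.zpowers_le.mpr ?_ : _ ≤ N ⊔ Subgroup.zpowers a) hk
          rw [hxK j]
          right; simp
      rw [hKx]
      exact nonempty_Zc_mulEquiv_zpowers _ h4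
  · left
    refine nonempty_dihedralGroup_mulEquiv hn ?_ (hN ▸ haN) ?_ (fun k => by rw [hK, hN])
    · exact h.inj _ ha (by rw [map_mul]; exact h.sq _ haR)
    · apply h.conj_eq_inv haR hr
      exact N.mul_mem (Subgroup.Normal.conj_mem inferInstance r hrN a) hrN

theorem mem_zpowers_or (h : IsPlanarPointRep ρ R N) {r s : G}
    (hr : ∀ n ∈ N, ρ n ∈ R → n ∈ Subgroup.zpowers r) (hsN : s ∈ N) (hs : ρ s ∉ R)
    {k : G} (hk : k ∈ N) : k ∈ Subgroup.zpowers r ∨ s⁻¹ * k ∈ Subgroup.zpowers r := by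
  by_cases hkR : ρ k ∈ R
  · exact Or.inl (hr k hk hkR)
  · right
    apply hr _ (N.mul_mem (N.inv_mem hsN) hk)
    rw [map_mul, map_inv]
    exact h.mul_mem_of_notMem _ (fun h' => hs (R.inv_mem_iff.mp h')) _ hkR

theorem dihedral [N.Normal] (h : IsPlanarPointRep ρ R N) {r s : G} (hrN : r ∈ N) (hrR : ρ r ∈ R)
    (hr : ∀ n ∈ N, ρ n ∈ R → n ∈ Subgroup.zpowers r) (hsN : s ∈ N) (hs : ρ s ∉ R)
    {n : ℕ} (hn : orderOf r = n) : Nonempty (DihedralGroup n ≃* N) := by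
  have hle : Subgroup.zpowers r ≤ N := by rwa [Subgroup.zpowers_le]
  refine nonempty_dihedralGroup_mulEquiv (s := s) hn ?_ ?_ ?_ ?_
  · exact h.inj _ (N.mul_mem hsN hsN) (by rw [map_mul]; exact h.sq _ hs)
  · intro h'
    obtain ⟨k, rfl⟩ := Subgroup.mem_zpowers_iff.mp h'
    exact hs (by rw [map_zpow]; exact R.zpow_mem hrR k)
  · exact h.conj_eq_inv hs hrR
      (N.mul_mem (Subgroup.Normal.conj_mem inferInstance r hrN s) hrN)
  · intro k
    refine ⟨fun hk => h.mem_zpowers_or hr hsN hs hk, ?_⟩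
    rintro (h' | h')
    · exact hle h'
    · exact (N.mul_mem_cancel_left (N.inv_mem hsN)).mp (hle h')

theorem extension_of_dihedral [N.Normal] (h : IsPlanarPointRep ρ R N) {r s : G} (hrN : r ∈ N)
    (hrR : ρ r ∈ R) (hr : ∀ n ∈ N, ρ n ∈ R → n ∈ Subgroup.zpowers r) (hsN : s ∈ N)
    (hs : ρ s ∉ R) {a : G} (ha : a * a ∈ N) (haN : a ∉ N) {n : ℕ} (hn : orderOf r = n) :
    Nonempty ((DihedralGroup n × Zc 2) ≃* ↥(N ⊔ Subgroup.zpowers a)) ∨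
    (n = 2 ∧ Nonempty (DihedralGroup 4 ≃* ↥(N ⊔ Subgroup.zpowers a))) := by
  obtain ⟨c, hcN, hcR⟩ : ∃ c ∈ N, ρ (a * c) ∈ R := by
    by_cases haR : ρ a ∈ R
    · exact ⟨1, N.one_mem, by simpa using haR⟩
    · exact ⟨s, hsN, by rw [map_mul]; exact h.mul_mem_of_notMem _ haR _ hs⟩
  have hq : ∀ x : G, (x : G ⧸ N) = 1 ↔ x ∈ N := fun x => QuotientGroup.eq_one_iff x
  have hqa : (a : G ⧸ N) * a = 1 := by rw [← QuotientGroup.mk_mul, hq]; exact ha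
  have hK := fun k => mem_sup_zpowers_iff N ha (g := k)
  have hc := h.commute hrR hrN hcR
  have hac2 : (a * c) * (a * c) ∈ N := by
    rw [← hq] at hcN ⊢
    simp [hcN, hqa]
  obtain ⟨k, hk⟩ := Subgroup.mem_zpowers_iff.mp
    (hr _ hac2 (by rw [map_mul]; exact R.mul_mem hcR hcR))
  have key : ∀ j : ℤ, ∃ x, x = a * c * r ^ j ∧ ρ x ∈ R ∧ x ∉ N ∧ Commute x r ∧
      s * x * s⁻¹ = x⁻¹ ∧
      (∀ k, k ∈ N ⊔ Subgroup.zpowers a ↔ k ∈ N ∨ x⁻¹ * k ∈ N) := by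
    intro j
    have hd : c * r ^ j ∈ N := N.mul_mem hcN (N.zpow_mem hrN j)
    have hxR : ρ (a * c * r ^ j) ∈ R := by
      rw [map_mul, map_zpow]; exact R.mul_mem hcR (R.zpow_mem hrR j)
    refine ⟨a * c * r ^ j, rfl, hxR, ?_, ?_, ?_, ?_⟩
    · rw [mul_assoc, N.mul_mem_cancel_right hd]; exact haN
    · exact hc.mul_left ((Commute.refl r).zpow_left j)
    · apply h.conj_eq_inv hs hxR
      rw [← hq] at hsN hcN hrN ⊢
      simp [hsN, hcN, hrN, hqa]
    · intro k
      rw [hK, mul_assoc, mul_inv_rev, mul_assoc, N.mul_mem_cancel_left (N.inv_mem hd)]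
  rcases exists_sq_eq_one_or_sq_eq hc hk.symm with ⟨j, hj⟩ | ⟨hev, j, hj⟩
  · left
    obtain ⟨x, rfl, hxR, hxN, hxr, hxs, hxK⟩ := key j
    refine nonempty_prod_Zc_two_mulEquiv (M := N) (h.dihedral hrN hrR hr hsN hs hn) hj hxN ?_ hxK
    rw [inv_eq_of_mul_eq_one_left hj, mul_inv_eq_iff_eq_mul] at hxs
    intro m hm
    rcases h.mem_zpowers_or hr hsN hs hm with h' | h' <;>
      obtain ⟨l, hl⟩ := Subgroup.mem_zpowers_iff.mp h'
    · rw [← hl]; exact hxr.symm.zpow_left l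
    · have : m = s * r ^ l := by rw [hl]; simp
      rw [this]
      exact Commute.mul_left hxs (hxr.symm.zpow_left l)
  · right
    obtain ⟨x, rfl, hxR, hxN, hxr, hxs, hxK⟩ := key j
    set x := a * c * r ^ j
    obtain ⟨h2, h4⟩ := h.orderOf_sqrt hrN hxR hj hev
    refine ⟨hn ▸ h2, ?_⟩
    have hle : Subgroup.zpowers r ≤ Subgroup.zpowers x := by
      rw [Subgroup.zpowers_le, ← hj]
      exact mul_mem (Subgroup.mem_zpowers _) (Subgroup.mem_zpowers _)
    have hxx : x ∈ Subgroup.zpowers x := Subgroup.mem_zpowers x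
    have hxK' : Subgroup.zpowers x ≤ N ⊔ Subgroup.zpowers a := by
      rw [Subgroup.zpowers_le, hxK]
      right; simp
    refine nonempty_dihedralGroup_mulEquiv (s := s) h4 ?_ ?_ hxs ?_
    · exact h.inj _ (N.mul_mem hsN hsN) (by rw [map_mul]; exact h.sq _ hs)
    · intro h'
      obtain ⟨k, hk⟩ := Subgroup.mem_zpowers_iff.mp h'
      exact hs (by rw [← hk, map_zpow]; exact R.zpow_mem hxR k)
    · intro k
      constructor
      · rw [hxK]
        rintro (h' | h')
        · exact (h.mem_zpowers_or hr hsN hs h').imp (@hle _) (@hle _)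
        · rcases h.mem_zpowers_or hr hsN hs h' with h'' | h''
          · exact Or.inl ((Subgroup.mul_mem_cancel_left _ (inv_mem hxx)).mp (hle h''))
          · right
            have : s⁻¹ * (x⁻¹ * k) = x * (s⁻¹ * k) := by
              rw [← hxs]; group
            rw [this] at h''
            exact (Subgroup.mul_mem_cancel_left _ hxx).mp (hle h'')
      · rintro (h' | h')
        · exact hxK' h'
        · exact (Subgroup.mul_mem_cancel_left _
            (inv_mem (Subgroup.mem_sup_left hsN))).mp (hxK' h')

end IsPlanarPointRep

theorem nonempty_dihedralGroup_one : Nonempty (DihedralGroup 1 ≃* Zc 2) :=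
  ⟨mulEquivOfPrimeCardEq (p := 2) (by rw [DihedralGroup.nat_card]) (by simp)⟩

theorem nonempty_Zc_one_prod : Nonempty ((Zc 1 × Zc 2) ≃* Zc 2) :=
  ⟨mulEquivOfPrimeCardEq (p := 2) (by simp) (by simp)⟩

theorem nonempty_Zc_two_prod : Nonempty ((Zc 2 × Zc 2) ≃* DihedralGroup 2) := by
  have : IsKleinFour (Zc 2 × Zc 2) :=
    { card_four := by simp
      exponent_two := by
        apply Nat.dvd_antisymm
        · apply Monoid.exponent_dvd_of_forall_pow_eq_one
          decide
        · have h2 : orderOf ((Multiplicative.ofAdd 1, 1) : Zc 2 × Zc 2) = 2 :=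
            orderOf_eq_prime (by decide) (by decide)
          have h := Monoid.order_dvd_exponent ((Multiplicative.ofAdd 1, 1) : Zc 2 × Zc 2)
          rwa [h2] at h }
  exact IsKleinFour.nonempty_mulEquiv

theorem nonempty_Zc_three_prod : Nonempty ((Zc 3 × Zc 2) ≃* Zc 6) :=
  ⟨MulEquiv.prodMultiplicative _ _ |>.symm.trans
    (AddEquiv.toMultiplicative (ZMod.chineseRemainder (m := 3) (n := 2)
      (by norm_num)).toAddEquiv.symm)⟩

theorem nonempty_dihedralGroup_one_prod :
    Nonempty ((DihedralGroup 1 × Zc 2) ≃* DihedralGroup 2) := by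
  obtain ⟨e⟩ := nonempty_dihedralGroup_one
  obtain ⟨f⟩ := nonempty_Zc_two_prod
  exact ⟨(e.prodCongr (MulEquiv.refl _)).trans f⟩

theorem nonempty_mulEquiv_trans {A B C : Type*} [Group A] [Group B] [Group C]
    (e : Nonempty (A ≃* B)) (f : Nonempty (A ≃* C)) : Nonempty (B ≃* C) := by
  obtain ⟨e⟩ := e
  obtain ⟨f⟩ := f
  exact ⟨e.symm.trans f⟩

theorem reflections_swap {G : Type*} [Group G] (N : Subgroup G) [N.Normal] {a b : G}
    (ha : a * a ∈ N) (hb : b * b ∈ N) (hk : ∀ k : ℤ, (a * b) ^ k ∈ N → k = 0)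
    (hG : ∀ g : G, ∃ k : ℤ, ((a * b) ^ k)⁻¹ * g ∈ N ∨ ((a * b) ^ k * a)⁻¹ * g ∈ N) :
    (∀ k : ℤ, (b * a) ^ k ∈ N → k = 0) ∧
    (∀ g : G, ∃ k : ℤ, ((b * a) ^ k)⁻¹ * g ∈ N ∨ ((b * a) ^ k * b)⁻¹ * g ∈ N) := by
  have hq : ∀ x : G, x ∈ N ↔ (x : G ⧸ N) = 1 := fun x => (QuotientGroup.eq_one_iff x).symm
  have hqa : (a : G ⧸ N)⁻¹ = a := by
    rw [hq] at ha; exact inv_eq_of_mul_eq_one_left ha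
  have hqb : (b : G ⧸ N)⁻¹ = b := by
    rw [hq] at hb; exact inv_eq_of_mul_eq_one_left hb
  have hba : (b : G ⧸ N) * a = ((a : G ⧸ N) * (b : G ⧸ N))⁻¹ := by rw [mul_inv_rev, hqa, hqb]
  constructor
  · intro k h
    rw [← neg_eq_zero]
    apply hk
    rw [hq] at h ⊢
    rw [QuotientGroup.mk_zpow, QuotientGroup.mk_mul] at h ⊢
    rw [hba] at h
    rw [zpow_neg, ← inv_zpow, h]
  · intro g
    obtain ⟨k, h | h⟩ := hG g
    · refine ⟨-k, Or.inl ?_⟩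
      rw [hq] at h ⊢
      simp only [QuotientGroup.mk_zpow, QuotientGroup.mk_mul, QuotientGroup.mk_inv] at h ⊢
      rw [hba, inv_zpow', neg_neg, h]
    · refine ⟨-k - 1, Or.inr ?_⟩
      rw [hq] at h ⊢
      simp only [QuotientGroup.mk_zpow, QuotientGroup.mk_mul, QuotientGroup.mk_inv] at h ⊢
      rw [hba, inv_zpow', show -(-k - 1) = k + 1 by ring, zpow_add, zpow_one, mul_assoc, mul_assoc,
        inv_eq_iff_mul_eq_one.mp hqb, mul_one, h]

/-- The classification of the groups generated, modulo a faithfully represented planar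
crystallographic point group, by two reflections of infinite order product. -/
theorem IsPlanarPointRep.classification {G O : Type*} [Group G] [Group O] {ρ : G →* O}
    {R : Subgroup O} {N : Subgroup G} [N.Normal] (h : IsPlanarPointRep ρ R N)
    (hcyc : ∃ r ∈ N, ρ r ∈ R ∧ ∀ n ∈ N, ρ n ∈ R → n ∈ Subgroup.zpowers r) {a b : G}
    (ha : a * a ∈ N) (hb : b * b ∈ N) (hk : ∀ k : ℤ, (a * b) ^ k ∈ N → k = 0)
    (hG : ∀ g : G, ∃ k : ℤ, ((a * b) ^ k)⁻¹ * g ∈ N ∨ ((a * b) ^ k * a)⁻¹ * g ∈ N) :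
    IsAmalgam G PUnit (Zc 2) (Zc 2) ∨
    IsAmalgam G (Zc 2) (Zc 4) (Zc 4) ∨
    IsAmalgam G (Zc 2) (DihedralGroup 2) (Zc 4) ∨
    IsAmalgam G (Zc 2) (DihedralGroup 2) (DihedralGroup 2) ∨
    IsAmalgam G (Zc 3) (Zc 6) (Zc 6) ∨
    IsAmalgam G (Zc 3) (DihedralGroup 3) (Zc 6) ∨
    IsAmalgam G (Zc 3) (DihedralGroup 3) (DihedralGroup 3) ∨
    IsAmalgam G (Zc 4) (Zc 4 × Zc 2) (Zc 4 × Zc 2) ∨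
    IsAmalgam G (Zc 4) (DihedralGroup 4) (Zc 4 × Zc 2) ∨
    IsAmalgam G (Zc 4) (DihedralGroup 4) (DihedralGroup 4) ∨
    IsAmalgam G (Zc 6) (Zc 6 × Zc 2) (Zc 6 × Zc 2) ∨
    IsAmalgam G (Zc 6) (DihedralGroup 6) (Zc 6 × Zc 2) ∨
    IsAmalgam G (Zc 6) (DihedralGroup 6) (DihedralGroup 6) ∨
    IsAmalgam G (DihedralGroup 2) (DihedralGroup 2 × Zc 2) (DihedralGroup 2 × Zc 2) ∨
    IsAmalgam G (DihedralGroup 2) (DihedralGroup 4) (DihedralGroup 2 × Zc 2) ∨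
    IsAmalgam G (DihedralGroup 2) (DihedralGroup 4) (DihedralGroup 4) ∨
    IsAmalgam G (DihedralGroup 3) (DihedralGroup 3 × Zc 2) (DihedralGroup 3 × Zc 2) ∨
    IsAmalgam G (DihedralGroup 4) (DihedralGroup 4 × Zc 2) (DihedralGroup 4 × Zc 2) ∨
    IsAmalgam G (DihedralGroup 6) (DihedralGroup 6 × Zc 2) (DihedralGroup 6 × Zc 2) := by
  obtain ⟨hk', hG'⟩ := reflections_swap N ha hb hk hG
  have am := fun {F Ga Gb : Type} [Group F] [Group Ga] [Group Gb] =>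
    isAmalgam_of_reflections (F := F) (Ga := Ga) (Gb := Gb) N ha hb hk hG
  have am' := fun {F Ga Gb : Type} [Group F] [Group Ga] [Group Gb] =>
    isAmalgam_of_reflections (F := F) (Ga := Ga) (Gb := Gb) N hb ha hk' hG'
  have hab : (a * b) ^ (2 : ℤ) = a * b * (a * b) := zpow_two _
  have haN : a ∉ N := by
    intro h'
    refine absurd (hk 2 ?_) (by norm_num)
    rw [← QuotientGroup.eq_one_iff] at h' hb ⊢
    rw [hab]
    simpa [h'] using hb
  have hbN : b ∉ N := by
    intro h'
    refine absurd (hk 2 ?_) (by norm_num)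
    rw [← QuotientGroup.eq_one_iff] at h' ha ⊢
    rw [hab]
    simpa [h'] using ha
  obtain ⟨r, hrN, hrR, hr⟩ := hcyc
  have hord := h.order r hrR
  rw [h.orderOf_map hrN] at hord
  simp only [Finset.mem_insert, Finset.mem_singleton] at hord
  by_cases hs : ∃ s ∈ N, ρ s ∉ R
  · obtain ⟨s, hsN, hsR⟩ := hs
    have hF := fun {n} => h.dihedral hrN hrR hr hsN hsR (n := n)
    have hA := fun {n} => h.extension_of_dihedral hrN hrR hr hsN hsR ha haN (n := n)
    have hB := fun {n} => h.extension_of_dihedral hrN hrR hr hsN hsR hb hbN (n := n)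
    rcases hord with hn | hn | hn | hn | hn
    · replace hF := nonempty_mulEquiv_trans nonempty_dihedralGroup_one (hF hn)
      have hA := nonempty_mulEquiv_trans nonempty_dihedralGroup_one_prod
        ((hA hn).resolve_right (by simp))
      have hB := nonempty_mulEquiv_trans nonempty_dihedralGroup_one_prod
        ((hB hn).resolve_right (by simp))
      have := am hF hA hB
      simp only [this, true_or, or_true]
    · rcases hA hn with hA | ⟨-, hA⟩ <;> rcases hB hn with hB | ⟨-, hB⟩
      · have := am (hF hn) hA hB
        simp only [this, true_or, or_true]
      · have := am' (hF hn) hB hA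
        simp only [this, true_or, or_true]
      · have := am (hF hn) hA hB
        simp only [this, true_or, or_true]
      · have := am (hF hn) hA hB
        simp only [this, true_or, or_true]
    all_goals
      have := am (hF hn) ((hA hn).resolve_right (by simp)) ((hB hn).resolve_right (by simp))
      simp only [this, true_or, or_true]
  · have hs' : ∀ n ∈ N, ρ n ∈ R := fun n hn => by_contra fun h' => hs ⟨n, hn, h'⟩
    have hN : N = Subgroup.zpowers r :=
      le_antisymm (fun n hn => hr n hn (hs' n hn)) (by rwa [Subgroup.zpowers_le])
    have hF : ∀ n, orderOf r = n → Nonempty (Zc n ≃* N) := by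
      intro n hn
      rw [hN]
      exact nonempty_Zc_mulEquiv_zpowers r hn
    have hA := fun {n} => h.extension_of_cyclic hN hrR ha haN (n := n)
    have hB := fun {n} => h.extension_of_cyclic hN hrR hb hbN (n := n)
    rcases hord with hn | hn | hn | hn | hn
    · have hZ : ∀ {c : G}, (Nonempty (DihedralGroup 1 ≃* ↥(N ⊔ Subgroup.zpowers c)) ∨
          Nonempty ((Zc 1 × Zc 2) ≃* ↥(N ⊔ Subgroup.zpowers c)) ∨
          ((1 : ℕ) = 2 ∧ Nonempty (Zc 4 ≃* ↥(N ⊔ Subgroup.zpowers c)))) →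
          Nonempty (Zc 2 ≃* ↥(N ⊔ Subgroup.zpowers c)) := by
        rintro c (h1 | h1 | ⟨h1, -⟩)
        · exact nonempty_mulEquiv_trans nonempty_dihedralGroup_one h1
        · exact nonempty_mulEquiv_trans nonempty_Zc_one_prod h1
        · norm_num at h1
      have hP : Nonempty (Zc 1 ≃* PUnit.{1}) := ⟨MulEquiv.ofUnique⟩
      have := am (nonempty_mulEquiv_trans hP (hF 1 hn)) (hZ (hA hn)) (hZ (hB hn))
      simp only [this, true_or]
    · have hZ : ∀ {c : G}, (Nonempty (DihedralGroup 2 ≃* ↥(N ⊔ Subgroup.zpowers c)) ∨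
          Nonempty ((Zc 2 × Zc 2) ≃* ↥(N ⊔ Subgroup.zpowers c)) ∨
          ((2 : ℕ) = 2 ∧ Nonempty (Zc 4 ≃* ↥(N ⊔ Subgroup.zpowers c)))) →
          Nonempty (DihedralGroup 2 ≃* ↥(N ⊔ Subgroup.zpowers c)) ∨
          Nonempty (Zc 4 ≃* ↥(N ⊔ Subgroup.zpowers c)) := by
        rintro c (h1 | h1 | ⟨-, h1⟩)
        · exact Or.inl h1
        · exact Or.inl (nonempty_mulEquiv_trans nonempty_Zc_two_prod h1)
        · exact Or.inr h1
      rcases hZ (hA hn) with hA | hA <;> rcases hZ (hB hn) with hB | hB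
      · have := am (hF _ hn) hA hB
        simp only [this, true_or, or_true]
      · have := am (hF _ hn) hA hB
        simp only [this, true_or, or_true]
      · have := am' (hF _ hn) hB hA
        simp only [this, true_or, or_true]
      · have := am (hF _ hn) hA hB
        simp only [this, true_or, or_true]
    · have hZ : ∀ {c : G}, (Nonempty (DihedralGroup 3 ≃* ↥(N ⊔ Subgroup.zpowers c)) ∨
          Nonempty ((Zc 3 × Zc 2) ≃* ↥(N ⊔ Subgroup.zpowers c)) ∨
          ((3 : ℕ) = 2 ∧ Nonempty (Zc 4 ≃* ↥(N ⊔ Subgroup.zpowers c)))) →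
          Nonempty (DihedralGroup 3 ≃* ↥(N ⊔ Subgroup.zpowers c)) ∨
          Nonempty (Zc 6 ≃* ↥(N ⊔ Subgroup.zpowers c)) := by
        rintro c (h1 | h1 | ⟨h1, -⟩)
        · exact Or.inl h1
        · exact Or.inr (nonempty_mulEquiv_trans nonempty_Zc_three_prod h1)
        · norm_num at h1
      rcases hZ (hA hn) with hA | hA <;> rcases hZ (hB hn) with hB | hB
      · have := am (hF _ hn) hA hB
        simp only [this, true_or, or_true]
      · have := am (hF _ hn) hA hB
        simp only [this, true_or, or_true]
      · have := am' (hF _ hn) hB hA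
        simp only [this, true_or, or_true]
      · have := am (hF _ hn) hA hB
        simp only [this, true_or, or_true]
    all_goals
      rcases hA hn with hA | hA | ⟨h1, -⟩
      · rcases hB hn with hB | hB | ⟨h1, -⟩
        · have := am (hF _ hn) hA hB
          simp only [this, true_or, or_true]
        · have := am (hF _ hn) hA hB
          simp only [this, true_or, or_true]
        · norm_num at h1
      · rcases hB hn with hB | hB | ⟨h1, -⟩
        · have := am' (hF _ hn) hB hA
          simp only [this, true_or, or_true]
        · have := am (hF _ hn) hA hB
          simp only [this, true_or, or_true]
        · norm_num at h1
      · norm_num at h1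

open scoped RealInnerProductSpace

theorem LinearMap.det_adjoint_real {V : Type*} [NormedAddCommGroup V] [InnerProductSpace ℝ V]
    [FiniteDimensional ℝ V] (f : V →ₗ[ℝ] V) :
    LinearMap.det (LinearMap.adjoint f) = LinearMap.det f := by
  have b := stdOrthonormalBasis ℝ V
  rw [← LinearMap.det_toMatrix b.toBasis, ← LinearMap.det_toMatrix b.toBasis,
    LinearMap.toMatrix_adjoint, Matrix.det_conjTranspose, star_trivial]

section

variable {V : Type*} [NormedAddCommGroup V] [InnerProductSpace ℝ V]

theorem inner_sub_inner_smul {v : V} (hv : ‖v‖ = 1) (x : V) : ⟪v, x - ⟪v, x⟫ • v⟫ = 0 := by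
  rw [inner_sub_right, real_inner_smul_right, real_inner_self_eq_norm_sq, hv]
  ring

theorem norm_sub_inner_smul_le {v : V} (hv : ‖v‖ = 1) (x : V) : ‖x - ⟪v, x⟫ • v‖ ≤ ‖x‖ := by
  have h : ‖x‖ ^ 2 = ‖x - ⟪v, x⟫ • v‖ ^ 2 + ‖⟪v, x⟫ • v‖ ^ 2 := by
    conv_lhs => rw [← sub_add_cancel x (⟪v, x⟫ • v)]
    rw [norm_add_sq_real, real_inner_smul_right, real_inner_comm v, inner_sub_inner_smul hv]
    ring
  nlinarith [norm_nonneg x, norm_nonneg (x - ⟪v, x⟫ • v), sq_nonneg ‖⟪v, x⟫ • v‖]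

end

/-- A rotation of Euclidean 3-space close to the identity has an axis. -/
theorem exists_unit_fixed (A : E 3 ≃ₗᵢ[ℝ] E 3) (hA : ∀ x, ‖A x - x‖ ≤ 1 / 2 * ‖x‖) :
    ∃ v : E 3, ‖v‖ = 1 ∧ A v = v := by
  set f : E 3 →ₗ[ℝ] E 3 := A.toLinearEquiv.toLinearMap with hf
  have hfA : ∀ x, f x = A x := fun x => rfl
  have had : LinearMap.adjoint f ∘ₗ f = LinearMap.id := by
    ext1 x
    apply ext_inner_right ℝ
    intro y
    simp [LinearMap.adjoint_inner_left, hfA, A.inner_map_map]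
  have h1 : LinearMap.det (f + LinearMap.id) * LinearMap.det f
      = LinearMap.det (f + LinearMap.id) := by
    rw [← LinearMap.det_adjoint_real (f + LinearMap.id), ← LinearMap.det_comp, map_add,
      LinearMap.add_comp, had, LinearMap.adjoint_id, LinearMap.id_comp, add_comm,
      ← LinearMap.det_adjoint_real, map_add, LinearMap.adjoint_id]
  have h2 : LinearMap.det (f - LinearMap.id) * LinearMap.det f
      = - LinearMap.det (f - LinearMap.id) := by
    have : -LinearMap.det (f - LinearMap.id) = LinearMap.det (LinearMap.id - f) := by
      rw [← neg_sub f, ← neg_one_smul ℝ (f - _), LinearMap.det_smul]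
      norm_num
    rw [this, ← LinearMap.det_adjoint_real (f - LinearMap.id), ← LinearMap.det_comp, map_sub,
      LinearMap.sub_comp, had, LinearMap.adjoint_id, LinearMap.id_comp]
  have h3 : LinearMap.det (f + LinearMap.id) ≠ 0 := by
    intro h
    obtain ⟨x, hx, hx0⟩ := (Submodule.ne_bot_iff _).mp
      (bot_lt_iff_ne_bot.mp (LinearMap.bot_lt_ker_of_det_eq_zero h))
    have hx1 : A x = -x := by
      have : f x + x = 0 := hx
      rw [hfA] at this
      exact eq_neg_of_add_eq_zero_left this
    have := hA x
    rw [hx1, ← neg_add', norm_neg, ← two_smul ℝ x, norm_smul] at this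
    have hp := norm_pos_iff.mpr hx0
    norm_num at this
    linarith
  have h4 : LinearMap.det f = 1 := mul_left_cancel₀ h3 (by rw [h1, mul_one])
  have h5 : LinearMap.det (f - LinearMap.id) = 0 := by rw [h4] at h2; linarith
  obtain ⟨x, hx, hx0⟩ := (Submodule.ne_bot_iff _).mp
    (bot_lt_iff_ne_bot.mp (LinearMap.bot_lt_ker_of_det_eq_zero h5))
  have hx1 : f x - x = 0 := hx
  rw [hfA, sub_eq_zero] at hx1
  refine ⟨‖x‖⁻¹ • x, ?_, by rw [map_smul, hx1]⟩
  rw [norm_smul, norm_inv, norm_norm, inv_mul_cancel₀ (norm_ne_zero_iff.mpr hx0)]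

/-- An isometric identification of the plane orthogonal to a unit vector with `ℂ`. -/
theorem exists_complex_orthogonal {v : E 3} (hv : ‖v‖ = 1) :
    ∃ J : ℂ →ₗᵢ[ℝ] E 3, (∀ z, ⟪v, J z⟫ = 0) ∧ ∀ w, ⟪v, w⟫ = 0 → ∃ z, J z = w := by
  have : Fact (Module.finrank ℝ (E 3) = 2 + 1) := ⟨by simp⟩
  have hv0 : v ≠ 0 := by rintro rfl; simp at hv
  let e := Complex.isometryOfOrthonormal
    (OrthonormalBasis.fromOrthogonalSpanSingleton (𝕜 := ℝ) 2 hv0)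
  refine ⟨(Submodule.subtypeₗᵢ _).comp e.toLinearIsometry, fun z => ?_, fun w hw => ?_⟩
  · exact Submodule.mem_orthogonal_singleton_iff_inner_right.mp (e z).2
  · refine ⟨e.symm ⟨w, Submodule.mem_orthogonal_singleton_iff_inner_right.mpr hw⟩, ?_⟩
    simp

/-- A linear isometry preserving an axis acts on the orthogonal plane. -/
theorem exists_planar_part {v : E 3} {J : ℂ →ₗᵢ[ℝ] E 3} (hJ : ∀ z, ⟪v, J z⟫ = 0)
    (hJ' : ∀ w, ⟪v, w⟫ = 0 → ∃ z, J z = w) (A : E 3 ≃ₗᵢ[ℝ] E 3) {ε : ℝ} (hε : ε ≠ 0)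
    (hA : A v = ε • v) : ∃ B : ℂ ≃ₗᵢ[ℝ] ℂ, ∀ z, A (J z) = J (B z) := by
  have h : ∀ z, ∃ w, J w = A (J z) := by
    intro z
    apply hJ'
    have := A.inner_map_map v (J z)
    rw [hJ, hA, real_inner_smul_left] at this
    exact (mul_eq_zero.mp this).resolve_left hε
  choose B hB using h
  let B' : ℂ →ₗᵢ[ℝ] ℂ :=
    { toFun := B
      map_add' := fun x y => J.injective (by rw [hB, map_add, map_add, map_add, hB, hB])
      map_smul' := fun c x => J.injective (by
        rw [hB, map_smul, map_smul, RingHom.id_apply, map_smul, hB])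
      norm_map' := fun x => by
        change ‖B x‖ = ‖x‖
        rw [← J.norm_map, hB, A.norm_map, J.norm_map] }
  exact ⟨B'.toLinearIsometryEquiv rfl, fun z => (hB z).symm⟩

/-- A nontrivial isometry close to the identity displaces the vectors orthogonal to its axis
by a constant factor. -/
theorem exists_axis (A : E 3 ≃ₗᵢ[ℝ] E 3) (hA : ∀ x, ‖A x - x‖ ≤ 1 / 2 * ‖x‖)
    (hA1 : ∃ x, A x ≠ x) :
    ∃ (v : E 3) (c : ℝ), ‖v‖ = 1 ∧ A v = v ∧ 0 < c ∧ c ≤ 1 / 2 ∧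
      (∀ x, ‖A x - x‖ ≤ c * ‖x‖) ∧ ∀ w, ⟪v, w⟫ = 0 → ‖A w - w‖ = c * ‖w‖ := by
  obtain ⟨v, hv, hAv⟩ := exists_unit_fixed A hA
  obtain ⟨J, hJ, hJ'⟩ := exists_complex_orthogonal hv
  obtain ⟨B, hB⟩ := exists_planar_part hJ hJ' A one_ne_zero (by rw [hAv, one_smul])
  have hB' : ∀ z, ‖B z - z‖ ≤ 1 / 2 * ‖z‖ := by
    intro z
    have := hA (J z)
    rwa [hB, ← map_sub, J.norm_map, J.norm_map] at this
  obtain ⟨a, rfl | rfl⟩ := linear_isometry_complex B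
  · have hw : ∀ w, ⟪v, w⟫ = 0 → ‖A w - w‖ = ‖(a : ℂ) - 1‖ * ‖w‖ := by
      intro w hw
      obtain ⟨z, rfl⟩ := hJ' w hw
      rw [hB, ← map_sub, J.norm_map, J.norm_map, rotation_apply, ← norm_mul]
      congr 1
      ring
    have hx : ∀ x, ∃ w, ⟪v, w⟫ = 0 ∧ A x - x = A w - w ∧ ‖w‖ ≤ ‖x‖ := by
      intro x
      refine ⟨x - ⟪v, x⟫ • v, inner_sub_inner_smul hv x, ?_, norm_sub_inner_smul_le hv x⟩
      rw [map_sub, map_smul, hAv]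
      abel
    have hle : ∀ x, ‖A x - x‖ ≤ ‖(a : ℂ) - 1‖ * ‖x‖ := by
      intro x
      obtain ⟨w, hw1, hw2, hw3⟩ := hx x
      rw [hw2, hw w hw1]
      gcongr
    refine ⟨v, ‖(a : ℂ) - 1‖, hv, hAv, ?_, ?_, hle, hw⟩
    · apply lt_of_le_of_ne (norm_nonneg _)
      intro h
      obtain ⟨x, hx⟩ := hA1
      have := hle x
      rw [← h, zero_mul, norm_le_zero_iff, sub_eq_zero] at this
      exact hx this
    · have := hB' 1
      simpa [rotation_apply] using this
  · exfalso
    have h1 := hB' 1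
    have h2 := hB' Complex.I
    simp [rotation_apply] at h1 h2
    have h3 : ‖-((a : ℂ) * Complex.I) - Complex.I‖ = ‖(a : ℂ) + 1‖ := by
      rw [show -((a : ℂ) * Complex.I) - Complex.I = -(((a : ℂ) + 1) * Complex.I) by ring, norm_neg,
        norm_mul, Complex.norm_I, mul_one]
    rw [h3] at h2
    have h4 : ‖((a : ℂ) + 1) - (a - 1)‖ ≤ _ := norm_sub_le _ _
    rw [show ((a : ℂ) + 1) - (a - 1) = 2 by ring, Complex.norm_ofNat] at h4
    norm_num at h1 h2
    linarith

/-- The linear part of an isometry of Euclidean space. -/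
def linPart {n : ℕ} : Isom n →* (E n ≃ₗᵢ[ℝ] E n) where
  toFun γ := γ.toRealLinearIsometryEquiv
  map_one' := by
    ext1 x
    simp
  map_mul' γ δ := by
    ext1 x
    change _ = γ.toRealLinearIsometryEquiv (δ.toRealLinearIsometryEquiv x)
    rw [δ.toRealLinearIsometryEquiv_apply, map_sub]
    simp

theorem apply_eq_linPart {n : ℕ} (γ : Isom n) (x : E n) : γ x = linPart γ x + γ 0 := by
  simp [linPart]

theorem linPart_mul_apply {n : ℕ} (γ δ : Isom n) (x : E n) :
    linPart (γ * δ) x = linPart γ (linPart δ x) := by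
  rw [map_mul]; rfl

theorem linPart_inv_apply {n : ℕ} (γ : Isom n) (x : E n) :
    linPart γ (linPart γ⁻¹ x) = x := by
  rw [← linPart_mul_apply, mul_inv_cancel, map_one]
  rfl

theorem linPart_apply_inv {n : ℕ} (γ : Isom n) (x : E n) :
    linPart γ⁻¹ (linPart γ x) = x := by
  rw [← linPart_mul_apply, inv_mul_cancel, map_one]
  rfl

namespace IsCrystallographic

variable {n : ℕ} {Γ : Subgroup (Isom n)}

theorem finite_norm_le (hΓ : IsCrystallographic Γ) (R : ℝ) :
    {γ : Isom n | γ ∈ Γ ∧ ‖γ 0‖ ≤ R}.Finite := by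
  refine (hΓ.1 {0} (Metric.closedBall 0 R) isCompact_singleton
    (isCompact_closedBall 0 R)).subset ?_
  rintro γ ⟨hγ, h⟩
  exact ⟨hγ, γ 0, ⟨0, rfl, rfl⟩, by simpa using h⟩

theorem exists_norm_sub_le (hΓ : IsCrystallographic Γ) :
    ∃ D : ℝ, ∀ x : E n, ∃ γ ∈ Γ, ‖γ 0 - x‖ ≤ D := by
  obtain ⟨K, hK, h⟩ := hΓ.2
  obtain ⟨D, hD⟩ := hK.isBounded.exists_norm_le
  refine ⟨D, fun x => ?_⟩
  obtain ⟨γ, hγ, hx⟩ := h x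
  refine ⟨γ⁻¹, Γ.inv_mem hγ, ?_⟩
  have h1 : γ (γ⁻¹ 0) = 0 := IsometryEquiv.apply_inv_self γ 0
  rw [← dist_eq_norm, ← γ.dist_eq, h1, dist_zero_left]
  exact hD _ hx

theorem exists_minimal (hΓ : IsCrystallographic Γ) (P : Isom n → Prop) (h : ∃ γ ∈ Γ, P γ) :
    ∃ γ ∈ Γ, P γ ∧ ∀ δ ∈ Γ, P δ → ‖γ 0‖ ≤ ‖δ 0‖ := by
  obtain ⟨γ, hγ, hP⟩ := h
  have hfin : {δ : Isom n | (δ ∈ Γ ∧ ‖δ 0‖ ≤ ‖γ 0‖) ∧ P δ}.Finite :=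
    (hΓ.finite_norm_le ‖γ 0‖).subset fun δ h => h.1
  obtain ⟨δ, hδ, hmin⟩ := Set.exists_min_image _ (fun δ : Isom n => ‖δ 0‖) hfin
    ⟨γ, ⟨hγ, le_rfl⟩, hP⟩
  refine ⟨δ, hδ.1.1, hδ.2, fun η hη hPη => ?_⟩
  rcases le_total ‖η 0‖ ‖γ 0‖ with h | h
  · exact hmin η ⟨⟨hη, h⟩, hPη⟩
  · exact hδ.1.2.trans h

/-- In any direction, a crystallographic group contains elements with linear part close to the
identity. -/
theorem exists_almost_translation (hΓ : IsCrystallographic Γ) (u : E n) {ε δ : ℝ} (hε : 0 < ε)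
    (hδ : 0 < δ) : ∃ β ∈ Γ, ∃ t : ℝ, 0 < t ∧ (∀ x, ‖linPart β x - x‖ ≤ ε * ‖x‖) ∧
      ‖β 0 - t • u‖ ≤ δ * t := by
  obtain ⟨D, hD⟩ := hΓ.exists_norm_sub_le
  choose γ hγ hγD using fun k : ℕ => hD ((k : ℝ) • u)
  let A : ℕ → (E n →L[ℝ] E n) := fun k => (linPart (γ k)).toContinuousLinearEquiv
  have hAa : ∀ k x, A k x = linPart (γ k) x := fun k x => rfl
  have hA : ∀ k, A k ∈ Metric.closedBall (0 : E n →L[ℝ] E n) 1 := by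
    intro k
    rw [mem_closedBall_zero_iff]
    refine ContinuousLinearMap.opNorm_le_bound _ zero_le_one fun x => ?_
    rw [hAa, LinearIsometryEquiv.norm_map, one_mul]
  have : ProperSpace (E n →L[ℝ] E n) := FiniteDimensional.proper ℝ _
  obtain ⟨L, -, φ, hφ, hL⟩ := (isCompact_closedBall (0 : E n →L[ℝ] E n) 1).tendsto_subseq hA
  obtain ⟨N, hN⟩ := Metric.cauchySeq_iff.mp hL.cauchySeq ε hε
  obtain ⟨M, hM⟩ := exists_nat_gt ((D + ‖γ (φ N) 0‖) / δ)
  set i := φ N with hi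
  set j := φ (N + M + 1) with hj
  have hjM : (M + 1 : ℝ) ≤ j := by
    have := hφ.id_le (N + M + 1)
    simp only [id_eq] at this
    exact_mod_cast (show M + 1 ≤ N + M + 1 by omega).trans this
  have hnear : ∀ x, ‖linPart (γ j * (γ i)⁻¹) x - x‖ ≤ ε * ‖x‖ := by
    intro x
    have h1 : linPart (γ j * (γ i)⁻¹) x - x
        = (A j - A i) (linPart (γ i)⁻¹ x) := by
      rw [sub_apply, hAa, hAa, linPart_inv_apply, linPart_mul_apply]
    rw [h1]
    refine (ContinuousLinearMap.le_opNorm _ _).trans ?_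
    rw [LinearIsometryEquiv.norm_map]
    gcongr
    rw [← dist_eq_norm]
    exact (hN _ (by omega) _ le_rfl).le
  refine ⟨γ j * (γ i)⁻¹, Γ.mul_mem (hγ _) (Γ.inv_mem (hγ _)), j, by linarith [M.cast_nonneg (α := ℝ)],
    hnear, ?_⟩
  have h2 : (γ j * (γ i)⁻¹) (γ i 0) = γ j 0 := by
    rw [IsometryEquiv.mul_apply]
    congr 1
    exact IsometryEquiv.inv_apply_self _ _
  rw [apply_eq_linPart] at h2
  have h3 : (γ j * (γ i)⁻¹) 0 - (j : ℝ) • u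
      = (γ j 0 - (j : ℝ) • u) - linPart (γ j * (γ i)⁻¹) (γ i 0) := by
    rw [← h2]; abel
  rw [h3]
  refine (norm_sub_le _ _).trans ?_
  rw [LinearIsometryEquiv.norm_map]
  rw [div_lt_iff₀ hδ] at hM
  have := hγD j
  nlinarith

end IsCrystallographic

/-- The translation part of a commutator. -/
theorem commutator_apply_zero {n : ℕ} (α β : Isom n) :
    (α * β * α⁻¹ * β⁻¹) 0 = (linPart α (β 0) - β 0) +
      ((β 0 - linPart (α * β * α⁻¹ * β⁻¹) (β 0)) +
        (α 0 - linPart α (linPart β (linPart α⁻¹ (α 0))))) := by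
  set κ := α * β * α⁻¹ * β⁻¹ with hκ
  have h1 : κ (β (α 0)) = α (β 0) := by
    rw [← IsometryEquiv.mul_apply, ← IsometryEquiv.mul_apply, ← IsometryEquiv.mul_apply,
      show κ * β * α = α * β by rw [hκ]; group]
  rw [apply_eq_linPart κ, apply_eq_linPart β, apply_eq_linPart α (β 0), map_add] at h1
  have h2 : linPart κ (linPart β (α 0)) = linPart α (linPart β (linPart α⁻¹ (α 0))) := by
    rw [← linPart_mul_apply, ← linPart_mul_apply, ← linPart_mul_apply,
      show κ * β = α * β * α⁻¹ by rw [hκ]; group, mul_assoc]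
  rw [h2] at h1
  have h3 : κ 0 = linPart α (β 0) + α 0
      - (linPart α (linPart β (linPart α⁻¹ (α 0))) + linPart κ (β 0)) := by
    rw [← h1]; abel
  rw [h3]; abel

theorem norm_linPart_commutator_sub_le {n : ℕ} {α β : Isom n} {c d : ℝ} (hc : 0 ≤ c)
    (hα : ∀ x, ‖linPart α x - x‖ ≤ c * ‖x‖) (hd : 0 ≤ d)
    (hβ : ∀ x, ‖linPart β x - x‖ ≤ d * ‖x‖) (x : E n) :
    ‖linPart (α * β * α⁻¹ * β⁻¹) x - x‖ ≤ 2 * c * d * ‖x‖ := by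
  set y := linPart α⁻¹ (linPart β⁻¹ x) with hy
  have hny : ‖y‖ = ‖x‖ := by rw [hy, LinearIsometryEquiv.norm_map, LinearIsometryEquiv.norm_map]
  have hx : x = linPart β (linPart α y) := by rw [hy, linPart_inv_apply, linPart_inv_apply]
  have h1 : linPart (α * β * α⁻¹ * β⁻¹) x - x
      = (linPart α (linPart β y - y) - (linPart β y - y))
        - (linPart β (linPart α y - y) - (linPart α y - y)) := by
    rw [linPart_mul_apply, linPart_mul_apply, linPart_mul_apply, ← hy]
    rw [show linPart α (linPart β y) - x = linPart α (linPart β y) -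
      linPart β (linPart α y) by rw [← hx]]
    rw [map_sub, map_sub]
    abel
  rw [h1]
  calc _ ≤ c * ‖linPart β y - y‖ + d * ‖linPart α y - y‖ :=
        (norm_sub_le _ _).trans (add_le_add (hα _) (hβ _))
    _ ≤ c * (d * ‖y‖) + d * (c * ‖y‖) := by gcongr <;> [exact hβ y; exact hα y]
    _ = 2 * c * d * ‖x‖ := by rw [hny]; ring

/-- A three-dimensional crystallographic group has no nontrivial linear parts close to the
identity. -/
theorem IsCrystallographic.linPart_eq_of_near {Γ : Subgroup (Isom 3)} (hΓ : IsCrystallographic Γ)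
    {γ : Isom 3} (hγ : γ ∈ Γ) (hnear : ∀ x, ‖linPart γ x - x‖ ≤ 1 / 2 * ‖x‖) (x : E 3) :
    linPart γ x = x := by
  by_contra hx
  obtain ⟨α, hα, ⟨hαn, hα1⟩, hαmin⟩ := hΓ.exists_minimal
    (fun α => (∀ x, ‖linPart α x - x‖ ≤ 1 / 2 * ‖x‖) ∧ ∃ x, linPart α x ≠ x) ⟨γ, hγ, hnear, x, hx⟩
  obtain ⟨v, c, hv, hαv, hc0, hc, hαc, hαw⟩ := exists_axis _ hαn hα1
  obtain ⟨J, hJ, -⟩ := exists_complex_orthogonal hv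
  have hT : ∃ β ∈ Γ, (∀ x, ‖linPart β x - x‖ ≤ c / 8 * ‖x‖) ∧
      |⟪v, β 0⟫| < ‖β 0 - ⟪v, β 0⟫ • v‖ := by
    obtain ⟨β, hβ, t, ht, hβn, hβt⟩ := hΓ.exists_almost_translation (J 1)
      (show 0 < c / 8 by positivity) (show (0 : ℝ) < 1 / 4 by norm_num)
    refine ⟨β, hβ, hβn, ?_⟩
    obtain ⟨e, he⟩ : ∃ e, e = β 0 - t • J 1 := ⟨_, rfl⟩
    have hβe : β 0 = t • J 1 + e := by rw [he]; abel
    rw [← he] at hβt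
    have h1 : ⟪v, β 0⟫ = ⟪v, e⟫ := by
      rw [hβe, inner_add_right, real_inner_smul_right, hJ]; ring
    have h2 : |⟪v, e⟫| ≤ ‖e‖ := by
      simpa [hv] using abs_real_inner_le_norm v e
    have h3 : ‖t • J 1‖ = t := by
      rw [norm_smul, J.norm_map, norm_one, mul_one, Real.norm_of_nonneg ht.le]
    have h4 : t • J 1 = (β 0 - ⟪v, β 0⟫ • v) - (e - ⟪v, e⟫ • v) := by
      rw [h1, hβe]; abel
    have h5 := norm_sub_le (β 0 - ⟪v, β 0⟫ • v) (e - ⟪v, e⟫ • v)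
    rw [← h4, h3] at h5
    have h6 := norm_sub_inner_smul_le hv e
    rw [h1] at h5 ⊢
    linarith
  obtain ⟨β, hβ, ⟨hβn, hβv⟩, hβmin⟩ := hΓ.exists_minimal _ hT
  have hκ : α * β * α⁻¹ * β⁻¹ ∈ Γ :=
    Γ.mul_mem (Γ.mul_mem (Γ.mul_mem hα hβ) (Γ.inv_mem hα)) (Γ.inv_mem hβ)
  have hκn : ∀ x, ‖linPart (α * β * α⁻¹ * β⁻¹) x - x‖ ≤ c / 8 * ‖x‖ := by
    intro x
    refine (norm_linPart_commutator_sub_le hc0.le hαc (by positivity) hβn x).trans ?_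
    gcongr
    nlinarith
  set κ := α * β * α⁻¹ * β⁻¹ with hκdef
  obtain ⟨b, hb⟩ : ∃ b, b = β 0 := ⟨_, rfl⟩
  rw [← hb] at hβv
  obtain ⟨r, hr⟩ : ∃ r, r = (β 0 - linPart κ (β 0)) +
    (α 0 - linPart α (linPart β (linPart α⁻¹ (α 0)))) := ⟨_, rfl⟩
  have hrn : ‖r‖ ≤ c / 4 * ‖b‖ := by
    by_cases h : ∃ x, linPart β x ≠ x
    · have h1 : ‖α 0‖ ≤ ‖b‖ := by
        rw [hb]
        exact hαmin β hβ ⟨fun x => (hβn x).trans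
          (mul_le_mul_of_nonneg_right (by linarith) (norm_nonneg x)), h⟩
      have h2 : α 0 - linPart α (linPart β (linPart α⁻¹ (α 0)))
          = linPart α (linPart α⁻¹ (α 0) - linPart β (linPart α⁻¹ (α 0))) := by
        rw [map_sub, linPart_inv_apply]
      have h3 : ‖α 0 - linPart α (linPart β (linPart α⁻¹ (α 0)))‖ ≤ c / 8 * ‖α 0‖ := by
        rw [h2, LinearIsometryEquiv.norm_map, norm_sub_rev]
        refine (hβn _).trans ?_
        rw [LinearIsometryEquiv.norm_map]
      have h4 : ‖β 0 - linPart κ (β 0)‖ ≤ c / 8 * ‖b‖ := by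
        rw [norm_sub_rev, hb]
        exact hκn _
      rw [hr]
      refine (norm_add_le _ _).trans ?_
      nlinarith
    · push Not at h
      have h5 : ∀ x, linPart β⁻¹ x = x := fun x => by
        conv_lhs => rw [← h x]
        exact linPart_apply_inv β x
      have h6 : r = 0 := by
        rw [hr, h, linPart_inv_apply, hκdef, linPart_mul_apply, linPart_mul_apply,
          linPart_mul_apply, h5, h, linPart_inv_apply]
        simp
      rw [h6, norm_zero]
      positivity
  obtain ⟨w, hw⟩ : ∃ w, w = b - ⟪v, b⟫ • v := ⟨_, rfl⟩
  have hvw : ⟪v, w⟫ = 0 := by rw [hw]; exact inner_sub_inner_smul hv b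
  rw [← hw] at hβv
  have hbw : ‖b‖ < 2 * ‖w‖ := by
    have h1 : b = w + ⟪v, b⟫ • v := by rw [hw]; abel
    have h2 := norm_add_le w (⟪v, b⟫ • v)
    rw [← h1, norm_smul, hv, mul_one, Real.norm_eq_abs] at h2
    linarith
  have hwb : ‖w‖ ≤ ‖b‖ := by rw [hw]; exact norm_sub_inner_smul_le hv b
  obtain ⟨y, hy⟩ : ∃ y, y = linPart α w - w := ⟨_, rfl⟩
  have hyn : ‖y‖ = c * ‖w‖ := by rw [hy]; exact hαw w hvw
  have hvy : ⟪v, y⟫ = 0 := by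
    rw [hy, inner_sub_right, hvw, sub_zero]
    conv_lhs => rw [← hαv]
    rw [LinearIsometryEquiv.inner_map_map, hvw]
  have hκ0 : κ 0 = y + r := by
    rw [hκdef, commutator_apply_zero, ← hκdef, ← hr, hy, ← hb, hw, map_sub, map_smul, hαv]
    abel
  have hvκ : ⟪v, κ 0⟫ = ⟪v, r⟫ := by rw [hκ0, inner_add_right, hvy, zero_add]
  have hvr : |⟪v, r⟫| ≤ ‖r‖ := by simpa [hv] using abs_real_inner_le_norm v r
  have hκv : |⟪v, κ 0⟫| < ‖κ 0 - ⟪v, κ 0⟫ • v‖ := by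
    have h1 : y = (κ 0 - ⟪v, κ 0⟫ • v) - (r - ⟪v, r⟫ • v) := by rw [hvκ, hκ0]; abel
    have h2 := norm_sub_le (κ 0 - ⟪v, κ 0⟫ • v) (r - ⟪v, r⟫ • v)
    rw [← h1, hyn] at h2
    have h3 := norm_sub_inner_smul_le hv r
    rw [hvκ] at h2 ⊢
    nlinarith
  have hle := hβmin κ hκ ⟨hκn, hκv⟩
  rw [← hb, hκ0] at hle
  have h7 := norm_add_le y r
  have h8 := norm_nonneg r
  nlinarith [norm_nonneg b]

theorem discreteTopology_of_finite_norm_le {V : Type*} [NormedAddCommGroup V]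
    (L : Submodule ℤ V) (hL : {x : V | x ∈ L ∧ ‖x‖ ≤ 1}.Finite) : DiscreteTopology L := by
  refine discreteTopology_iff_isOpen_singleton_zero.mpr
    ⟨({x : V | x ∈ L ∧ ‖x‖ ≤ 1} \ {0})ᶜ ∩ Metric.ball 0 1,
      (hL.sdiff.isClosed.isOpen_compl).inter Metric.isOpen_ball, ?_⟩
  ext x
  simp only [Set.mem_preimage, Set.mem_inter_iff, Set.mem_compl_iff, Set.mem_sdiff,
    Set.mem_ofPred_eq, SetLike.coe_mem, true_and, Set.mem_singleton_iff, mem_ball_zero_iff,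
    ZeroMemClass.coe_eq_zero, not_and, not_not]
  constructor
  · rintro ⟨h1, h2⟩
    exact h1 h2.le
  · rintro rfl
    simp

theorem exists_int_trace_eq {V : Type*} [NormedAddCommGroup V] [NormedSpace ℝ V]
    (L : Submodule ℤ V) [DiscreteTopology L] [IsZLattice ℝ L] [FiniteDimensional ℝ V]
    (f : V →ₗ[ℝ] V) (hf : ∀ x ∈ L, f x ∈ L) : ∃ k : ℤ, LinearMap.trace ℝ V f = k := by
  let b := Module.Free.chooseBasis ℤ L
  refine ⟨∑ i, b.repr ⟨f (b i), hf _ (b i).2⟩ i, ?_⟩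
  rw [LinearMap.trace_eq_matrix_trace ℝ (b.ofZLatticeBasis ℝ L), Matrix.trace]
  push_cast
  refine Finset.sum_congr rfl fun i _ => ?_
  rw [Matrix.diag_apply, LinearMap.toMatrix_apply, Module.Basis.ofZLatticeBasis_apply]
  exact b.ofZLatticeBasis_repr_apply ℝ L ⟨f (b i), hf _ (b i).2⟩ i

/-- The lattice of translations of a group of isometries. -/
def translationLattice {n : ℕ} (Γ : Subgroup (Isom n)) : Submodule ℤ (E n) where
  carrier := {b | ∃ γ ∈ Γ, ∀ x, γ x = x + b}
  zero_mem' := ⟨1, Γ.one_mem, fun x => by simp⟩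
  add_mem' := by
    rintro a b ⟨γ, hγ, ha⟩ ⟨δ, hδ, hb⟩
    refine ⟨δ * γ, Γ.mul_mem hδ hγ, fun x => ?_⟩
    rw [IsometryEquiv.mul_apply, hb, ha, add_assoc]
  smul_mem' := by
    rintro k b ⟨γ, hγ, hb⟩
    have hnat : ∀ m : ℕ, ∀ x, (γ ^ m) x = x + m • b := by
      intro m
      induction m with
      | zero => simp
      | succ m ih =>
        intro x
        rw [pow_succ, IsometryEquiv.mul_apply, ih, hb, add_smul, one_smul]
        abel
    refine ⟨γ ^ k, Γ.zpow_mem hγ k, fun x => ?_⟩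
    obtain ⟨m, rfl | rfl⟩ := k.eq_nat_or_neg
    · simpa using hnat m x
    · have h := hnat m ((γ ^ m)⁻¹ x)
      have h' : (γ ^ m) ((γ ^ m)⁻¹ x) = x := IsometryEquiv.apply_inv_self _ _
      rw [h'] at h
      rw [zpow_neg, zpow_natCast, neg_smul, natCast_zsmul]
      nth_rewrite 2 [h]
      abel

namespace IsCrystallographic

variable {Γ : Subgroup (Isom 3)}

theorem discreteTopology_translationLattice {n : ℕ} {Γ : Subgroup (Isom n)}
    (hΓ : IsCrystallographic Γ) : DiscreteTopology (translationLattice Γ) := by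
  apply discreteTopology_of_finite_norm_le
  refine ((hΓ.finite_norm_le 1).image fun γ => γ 0).subset ?_
  rintro b ⟨⟨γ, hγ, hb⟩, hb1⟩
  have : γ 0 = b := by rw [hb, zero_add]
  exact ⟨γ, ⟨hγ, by rwa [this]⟩, this⟩

/-- Bieberbach's theorem: the translations of a crystallographic group span the space. -/
theorem span_translationLattice (hΓ : IsCrystallographic Γ) :
    Submodule.span ℝ (translationLattice Γ : Set (E 3)) = ⊤ := by
  rw [← Submodule.orthogonal_eq_bot_iff, Submodule.eq_bot_iff]
  intro w hw
  by_contra hw0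
  obtain ⟨β, hβ, t, ht, hβn, hβt⟩ := hΓ.exists_almost_translation (‖w‖⁻¹ • w)
    (show (0 : ℝ) < 1 / 2 by norm_num) (show (0 : ℝ) < 1 / 2 by norm_num)
  have hβ1 := hΓ.linPart_eq_of_near hβ hβn
  have hmem : β 0 ∈ translationLattice Γ :=
    ⟨β, hβ, fun x => by rw [apply_eq_linPart, hβ1]⟩
  have horth : ⟪β 0, w⟫ = 0 := hw _ (Submodule.subset_span hmem)
  have hw1 : ‖w‖ ≠ 0 := norm_ne_zero_iff.mpr hw0
  have h1 : ⟪β 0 - t • ‖w‖⁻¹ • w, w⟫ = - (t * ‖w‖) := by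
    rw [inner_sub_left, horth, real_inner_smul_left, real_inner_smul_left,
      real_inner_self_eq_norm_sq]
    field_simp
    ring
  have h2 := abs_real_inner_le_norm (β 0 - t • ‖w‖⁻¹ • w) w
  rw [h1, abs_neg, abs_of_nonneg (by positivity)] at h2
  have h3 : 0 < ‖w‖ := norm_pos_iff.mpr hw0
  nlinarith [mul_pos ht h3]

theorem linPart_mem_translationLattice {n : ℕ} {Γ : Subgroup (Isom n)} {γ : Isom n} (hγ : γ ∈ Γ)
    {b : E n} (hb : b ∈ translationLattice Γ) : linPart γ b ∈ translationLattice Γ := by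
  obtain ⟨δ, hδ, h⟩ := hb
  refine ⟨γ * δ * γ⁻¹, Γ.mul_mem (Γ.mul_mem hγ hδ) (Γ.inv_mem hγ), fun x => ?_⟩
  have h' : γ (γ⁻¹ x) = x := IsometryEquiv.apply_inv_self _ _
  rw [IsometryEquiv.mul_apply, IsometryEquiv.mul_apply, h, apply_eq_linPart γ, map_add]
  nth_rewrite 2 [← h']
  rw [apply_eq_linPart γ (γ⁻¹ x)]
  abel

/-- The crystallographic restriction: traces of linear parts are integers. -/
theorem exists_int_trace_linPart (hΓ : IsCrystallographic Γ) {γ : Isom 3} (hγ : γ ∈ Γ) :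
    ∃ k : ℤ, LinearMap.trace ℝ (E 3) (linPart γ).toLinearEquiv.toLinearMap = k := by
  have := hΓ.discreteTopology_translationLattice
  have : IsZLattice ℝ (translationLattice Γ) := ⟨hΓ.span_translationLattice⟩
  exact exists_int_trace_eq (translationLattice Γ) _
    fun x hx => linPart_mem_translationLattice hγ hx

end IsCrystallographic

/-- The trace of a linear isometry preserving an axis and rotating the orthogonal plane. -/
theorem trace_eq_of_rotation {v : E 3} (hv : ‖v‖ = 1) {J : ℂ →ₗᵢ[ℝ] E 3} (hJ : ∀ z, ⟪v, J z⟫ = 0)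
    (A : E 3 ≃ₗᵢ[ℝ] E 3) {ε : ℝ} (hA : A v = ε • v) {a : Circle}
    (hB : ∀ z, A (J z) = J (rotation a z)) :
    LinearMap.trace ℝ (E 3) A.toLinearEquiv.toLinearMap = ε + 2 * (a : ℂ).re := by
  have hon : Orthonormal ℝ ![v, J 1, J Complex.I] := by
    rw [orthonormal_iff_ite]
    intro i j
    fin_cases i <;> fin_cases j <;>
      simp [hv, hJ, real_inner_comm v, Complex.inner]
  let b := (basisOfOrthonormalOfCardEqFinrank hon (by simp)).toOrthonormalBasis
    (by rwa [coe_basisOfOrthonormalOfCardEqFinrank])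
  have hb : ⇑b = ![v, J 1, J Complex.I] := by
    rw [Module.Basis.coe_toOrthonormalBasis, coe_basisOfOrthonormalOfCardEqFinrank]
  rw [LinearMap.trace_eq_sum_inner _ b, Fin.sum_univ_three, hb]
  simp [hA, hB, inner_smul_right, hv, Complex.inner, rotation_apply]
  ring

theorem circle_orderOf_mem {a : Circle} {k : ℤ} (h : 2 * (a : ℂ).re = k) :
    orderOf a ∈ ({1, 2, 3, 4, 6} : Finset ℕ) := by
  have hn : (a : ℂ).re ^ 2 + (a : ℂ).im ^ 2 = 1 := by
    have := Complex.normSq_apply (a : ℂ)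
    rw [Circle.normSq_coe] at this
    linarith
  have hq : (a : ℂ) ^ 2 - k * a + 1 = 0 := by
    have hk : (k : ℂ) = ((2 * (a : ℂ).re : ℝ) : ℂ) := by rw [h]; simp
    rw [hk]
    apply Complex.ext
    · simp [pow_two]; nlinarith
    · simp [pow_two]; ring
  have h1 : -2 ≤ k ∧ k ≤ 2 := by
    constructor <;> (rify; nlinarith [sq_nonneg (a : ℂ).im])
  have key : ∀ m : ℕ, (a : ℂ) ^ m = 1 → a ^ m = 1 := fun m hm => by
    apply Circle.ext
    simpa using hm
  have hdvd : orderOf a ∣ 4 ∨ orderOf a ∣ 6 := by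
    obtain ⟨h2, h3⟩ := h1
    interval_cases k
    · right
      apply orderOf_dvd_of_pow_eq_one
      apply key
      have : (a : ℂ) = -1 := by
        have : ((a : ℂ) + 1) ^ 2 = 0 := by push_cast at hq; linear_combination hq
        exact eq_neg_of_add_eq_zero_left (pow_eq_zero_iff (two_ne_zero) |>.mp this)
      rw [this]; norm_num
    · right
      apply orderOf_dvd_of_pow_eq_one
      apply key
      push_cast at hq
      linear_combination ((a : ℂ) ^ 3 + 1) * ((a : ℂ) - 1) * hq
    · left
      apply orderOf_dvd_of_pow_eq_one
      apply key
      push_cast at hq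
      linear_combination ((a : ℂ) ^ 2 - 1) * hq
    · right
      apply orderOf_dvd_of_pow_eq_one
      apply key
      push_cast at hq
      linear_combination ((a : ℂ) ^ 3 - 1) * ((a : ℂ) + 1) * hq
    · right
      apply orderOf_dvd_of_pow_eq_one
      apply key
      have : (a : ℂ) = 1 := by
        have : ((a : ℂ) - 1) ^ 2 = 0 := by push_cast at hq; linear_combination hq
        exact sub_eq_zero.mp (pow_eq_zero_iff (two_ne_zero) |>.mp this)
      rw [this]; norm_num
  rcases hdvd with h | h
  · have := Nat.mem_divisors.mpr ⟨h, by norm_num⟩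
    rw [show Nat.divisors 4 = {1, 2, 4} by decide] at this
    simp only [Finset.mem_insert, Finset.mem_singleton] at this ⊢
    tauto
  · have := Nat.mem_divisors.mpr ⟨h, by norm_num⟩
    rw [show Nat.divisors 6 = {1, 2, 3, 6} by decide] at this
    simp only [Finset.mem_insert, Finset.mem_singleton] at this ⊢
    tauto

section

variable {G : Type*} [Group G] {ε τ : G → ℝ}

theorem sign_translation_one (hε : ∀ g, ε g = 1 ∨ ε g = -1) (hεm : ∀ g h, ε (g * h) = ε g * ε h)
    (hτm : ∀ g h, τ (g * h) = ε g * τ h + τ g) : ε 1 = 1 ∧ τ 1 = 0 := by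
  have h1 : ε 1 = 1 := by
    have := hεm 1 1
    rcases hε 1 with h | h
    · exact h
    · rw [mul_one, h] at this; norm_num at this
  refine ⟨h1, ?_⟩
  have := hτm 1 1
  rw [mul_one, h1] at this
  linarith

theorem sign_translation_inv (hε : ∀ g, ε g = 1 ∨ ε g = -1)
    (hεm : ∀ g h, ε (g * h) = ε g * ε h) (hτm : ∀ g h, τ (g * h) = ε g * τ h + τ g) (g : G) :
    ε g⁻¹ = ε g ∧ τ g⁻¹ = -(ε g * τ g) := by
  obtain ⟨h1, h2⟩ := sign_translation_one hε hεm hτm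
  have h3 := hεm g⁻¹ g
  have h4 := hτm g⁻¹ g
  rw [inv_mul_cancel] at h3 h4
  rw [h1] at h3
  rw [h2] at h4
  have h5 : ε g⁻¹ = ε g := by
    rcases hε g with h | h <;> rw [h] at h3 ⊢ <;> linarith
  rw [h5] at h4
  exact ⟨h5, by linarith⟩

theorem normal_of_sign_translation (hε : ∀ g, ε g = 1 ∨ ε g = -1)
    (hεm : ∀ g h, ε (g * h) = ε g * ε h) (hτm : ∀ g h, τ (g * h) = ε g * τ h + τ g)
    (N : Subgroup G) (hN : ∀ g, g ∈ N ↔ ε g = 1 ∧ τ g = 0) : N.Normal := by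
  refine ⟨fun n hn g => ?_⟩
  obtain ⟨h1, h2⟩ := (hN n).mp hn
  obtain ⟨h3, h4⟩ := sign_translation_inv hε hεm hτm g
  rw [hN, hεm, hεm, hτm, hτm, hεm, h1, h2, h3, h4]
  rcases hε g with h | h <;> rw [h] <;> constructor <;> ring

/-- A cocompact action on the real line by translations and reflections with discrete translation
parts is, modulo its kernel, generated by two reflections. -/
theorem exists_second_reflection (hε : ∀ g, ε g = 1 ∨ ε g = -1)
    (hεm : ∀ g h, ε (g * h) = ε g * ε h) (hτm : ∀ g h, τ (g * h) = ε g * τ h + τ g)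
    (hfin : {t : ℝ | (∃ g, τ g = t) ∧ |t| ≤ 1}.Finite)
    (hcc : ∃ C : ℝ, ∀ t : ℝ, ∃ g, |ε g * t + τ g| ≤ C)
    (N : Subgroup G) (hN : ∀ g, g ∈ N ↔ ε g = 1 ∧ τ g = 0) {a : G} (ha : ε a = -1)
    (ha' : τ a = 0) : ∃ b : G, a * a ∈ N ∧ b * b ∈ N ∧ (∀ k : ℤ, (a * b) ^ k ∈ N → k = 0) ∧
      ∀ g, ∃ k : ℤ, ((a * b) ^ k)⁻¹ * g ∈ N ∨ ((a * b) ^ k * a)⁻¹ * g ∈ N := by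
  obtain ⟨hε1, hτ1⟩ := sign_translation_one hε hεm hτm
  have hinv := sign_translation_inv hε hεm hτm
  let T : AddSubgroup ℝ :=
    { carrier := {t | ∃ g, ε g = 1 ∧ τ g = t}
      zero_mem' := ⟨1, hε1, hτ1⟩
      add_mem' := by
        rintro s t ⟨g, hg, rfl⟩ ⟨h, hh, rfl⟩
        exact ⟨h * g, by rw [hεm, hg, hh, one_mul], by rw [hτm, hh, one_mul]⟩
      neg_mem' := by
        rintro s ⟨g, hg, rfl⟩
        exact ⟨g⁻¹, by rw [(hinv g).1, hg], by rw [(hinv g).2, hg, one_mul]⟩ }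
  have hT : ∀ g, τ g ∈ T := by
    intro g
    rcases hε g with h | h
    · exact ⟨g, h, rfl⟩
    · exact ⟨g * a, by rw [hεm, h, ha]; norm_num, by rw [hτm, ha']; ring⟩
  obtain ⟨d, hd⟩ : ∃ d, T = AddSubgroup.closure {d} := by
    obtain ⟨δ, hδ, hδ'⟩ := Metric.isOpen_iff.mp (hfin.sdiff (t := {0})).isClosed.isOpen_compl 0
      (by simp)
    refine AddSubgroup.cyclic_of_isolated_zero (a := min δ 1) (lt_min hδ one_pos) ?_
    rw [Set.disjoint_left]
    rintro t ⟨g, -, hg⟩ ⟨ht0, ht1⟩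
    refine hδ' (a := t) ?_ ⟨⟨⟨g, hg⟩, ?_⟩, ht0.ne'⟩
    · rw [mem_ball_zero_iff, Real.norm_of_nonneg ht0.le]
      exact ht1.trans_le (min_le_left _ _)
    · rw [abs_of_pos ht0]
      exact (ht1.trans_le (min_le_right _ _)).le
  have hTd : ∀ g, ∃ k : ℤ, τ g = k * d := by
    intro g
    have h := hT g
    rw [hd, AddSubgroup.mem_closure_singleton] at h
    obtain ⟨k, hk⟩ := h
    exact ⟨k, by rw [← hk, zsmul_eq_mul]⟩
  have hd0 : d ≠ 0 := by
    rintro rfl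
    obtain ⟨C, hC⟩ := hcc
    obtain ⟨g, hg⟩ := hC (|C| + 1)
    obtain ⟨k, hk⟩ := hTd g
    rw [hk, mul_zero, add_zero, abs_mul] at hg
    have h1 : |ε g| = 1 := by rcases hε g with h | h <;> simp [h]
    rw [h1, one_mul, abs_of_nonneg (by positivity)] at hg
    linarith [le_abs_self C]
  obtain ⟨g₀, hg₀, hg₀'⟩ : d ∈ T := by rw [hd]; exact AddSubgroup.mem_closure_singleton_self d
  have hpow : ∀ k : ℤ, ε (g₀ ^ k) = 1 ∧ τ (g₀ ^ k) = k * d := by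
    have hnat : ∀ m : ℕ, ε (g₀ ^ m) = 1 ∧ τ (g₀ ^ m) = m * d := by
      intro m
      induction m with
      | zero => simp [hε1, hτ1]
      | succ m ih =>
        rw [pow_succ, hεm, hτm, ih.1, ih.2, hg₀, hg₀']
        push_cast
        constructor <;> ring
    intro k
    obtain ⟨m, rfl | rfl⟩ := k.eq_nat_or_neg
    · simpa using hnat m
    · rw [zpow_neg, zpow_natCast, (hinv _).1, (hinv _).2, (hnat m).1, (hnat m).2]
      simp
  obtain ⟨hai, hai'⟩ := hinv a
  have hdiv : ∀ (g : G) (k : ℤ), τ g = k * d → τ ((g₀ ^ k)⁻¹ * g) = 0 := by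
    intro g k hk
    rw [hτm, (hinv _).1, (hinv _).2, (hpow k).1, (hpow k).2, hk]
    ring
  refine ⟨a⁻¹ * g₀, ?_, ?_, ?_, ?_⟩
  · rw [hN, hεm, hτm, ha, ha']
    norm_num
  · rw [hN, hεm, hτm, hεm, hτm, hai, hai', ha, ha', hg₀]
    constructor <;> ring
  · intro k hk
    rw [mul_inv_cancel_left, hN, (hpow k).2] at hk
    exact_mod_cast (mul_eq_zero.mp hk.2).resolve_right hd0
  · intro g
    obtain ⟨k, hk⟩ := hTd g
    have h1 := hdiv g k hk
    refine ⟨k, ?_⟩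
    rw [mul_inv_cancel_left]
    rcases hε g with h | h
    · left
      rw [hN]
      exact ⟨by rw [hεm, (hinv _).1, (hpow k).1, h, one_mul], h1⟩
    · right
      rw [hN, mul_inv_rev, mul_assoc, hεm, hτm, h1, hai, hai', ha, ha', hεm, (hinv _).1,
        (hpow k).1, h]
      norm_num

end

theorem isPlanarPointRep_of_injOn {G : Type*} [Group G] {ρ : G →* (ℂ ≃ₗᵢ[ℝ] ℂ)} {N : Subgroup G}
    (hinj : ∀ n ∈ N, ρ n = 1 → n = 1)
    (hord : ∀ g a, ρ g = rotation a → orderOf a ∈ ({1, 2, 3, 4, 6} : Finset ℕ)) :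
    IsPlanarPointRep ρ rotation.range N := by
  have hrefl : ∀ s : ℂ ≃ₗᵢ[ℝ] ℂ, s ∉ rotation.range →
      ∃ a : Circle, ∀ z, s z = a * (starRingEnd ℂ) z := by
    intro s hs
    obtain ⟨a, rfl | rfl⟩ := linear_isometry_complex s
    · exact absurd ⟨a, rfl⟩ hs
    · exact ⟨a, fun z => by simp [rotation_apply]⟩
  have hconj : ∀ a : Circle, (a : ℂ) * (starRingEnd ℂ) a = 1 := fun a => by
    rw [Complex.mul_conj, Circle.normSq_coe, Complex.ofReal_one]
  refine ⟨?_, ?_, ?_, ?_, hinj⟩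
  · rintro _ ⟨a, rfl⟩ _ ⟨b, rfl⟩
    rw [← map_mul, ← map_mul, mul_comm]
  · intro s hs
    obtain ⟨a, ha⟩ := hrefl s hs
    ext1 z
    change s (s z) = z
    rw [ha, ha, map_mul, Complex.conj_conj, ← mul_assoc, hconj, one_mul]
  · intro s hs t ht
    obtain ⟨a, ha⟩ := hrefl s hs
    obtain ⟨b, hb⟩ := hrefl t ht
    refine ⟨a * b⁻¹, ?_⟩
    ext1 z
    change rotation _ z = s (t z)
    have hz := rotation_apply (a * b⁻¹) z
    rw [Circle.coe_mul, Circle.coe_inv_eq_conj] at hz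
    rw [ha, hb, map_mul (starRingEnd ℂ), Complex.conj_conj, ← mul_assoc]
    exact hz
  · rintro g ⟨a, ha⟩
    rw [← ha, orderOf_injective rotation rotation_injective]
    exact hord g a ha.symm

theorem exists_generator_rotations {G : Type*} [Group G] {ρ : G →* (ℂ ≃ₗᵢ[ℝ] ℂ)}
    {N : Subgroup G} [Finite N] (hinj : ∀ n ∈ N, ρ n = 1 → n = 1) :
    ∃ r ∈ N, ρ r ∈ rotation.range ∧
      ∀ n ∈ N, ρ n ∈ rotation.range → n ∈ Subgroup.zpowers r := by
  let M : Subgroup G := N ⊓ rotation.range.comap ρ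
  have : Finite M := Finite.of_injective (Subgroup.inclusion (inf_le_left : M ≤ N))
    (Subgroup.inclusion_injective _)
  let f : M →* ℂ :=
    { toFun := fun n => ρ n 1
      map_one' := by simp
      map_mul' := by
        rintro ⟨x, -, a, ha⟩ ⟨y, -, b, hb⟩
        change ρ (x * y) 1 = ρ x 1 * ρ y 1
        rw [map_mul, ← ha, ← hb, ← map_mul]
        simp [rotation_apply] }
  have hf : Function.Injective f := by
    rw [injective_iff_map_eq_one]
    rintro ⟨x, hx, a, ha⟩ h
    change ρ x 1 = 1 at h
    rw [← ha, rotation_apply, mul_one] at h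
    have ha1 : a = 1 := Circle.ext (by simpa using h)
    rw [ha1, map_one] at ha
    exact Subtype.ext (hinj x hx ha.symm)
  have : IsCyclic M := isCyclic_of_injective_ringHom f hf
  obtain ⟨⟨r, hrN, hrR⟩, hr⟩ := IsCyclic.exists_generator (α := M)
  refine ⟨r, hrN, hrR, fun n hn hnR => ?_⟩
  obtain ⟨k, hk⟩ := hr ⟨n, hn, hnR⟩
  exact ⟨k, congrArg Subtype.val hk⟩

/-- A group of isometries preserving an axis acts on the orthogonal plane. -/
theorem exists_planar_rep {G : Subgroup (Isom 3)} {v : E 3} {J : ℂ →ₗᵢ[ℝ] E 3}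
    (hJ : ∀ z, ⟪v, J z⟫ = 0) (hJ' : ∀ w, ⟪v, w⟫ = 0 → ∃ z, J z = w)
    (hG : ∀ g : G, ∃ ε : ℝ, ε ≠ 0 ∧ linPart (g : Isom 3) v = ε • v) :
    ∃ ρ : G →* (ℂ ≃ₗᵢ[ℝ] ℂ), ∀ (g : G) z, linPart (g : Isom 3) (J z) = J (ρ g z) := by
  have h : ∀ g : G, ∃ B : ℂ ≃ₗᵢ[ℝ] ℂ, ∀ z, linPart (g : Isom 3) (J z) = J (B z) := fun g => by
    obtain ⟨ε, hε, hg⟩ := hG g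
    exact exists_planar_part hJ hJ' _ hε hg
  choose B hB using h
  refine ⟨⟨⟨B, ?_⟩, ?_⟩, hB⟩
  · ext1 z
    apply J.injective
    rw [← hB, Subgroup.coe_one, map_one]
    rfl
  · intro g h
    ext1 z
    apply J.injective
    change _ = J (B g (B h z))
    rw [← hB, Subgroup.coe_mul, linPart_mul_apply, hB, hB]

/-- The action of an isometry on an invariant line. -/
theorem exists_sign_translation (g : Isom 3) {p v : E 3} (hv : ‖v‖ = 1)
    (hg : ∀ t : ℝ, ∃ s : ℝ, g (p + t • v) = p + s • v) :
    ∃ ε τ : ℝ, (ε = 1 ∨ ε = -1) ∧ linPart g v = ε • v ∧ g p = p + τ • v := by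
  obtain ⟨τ, hτ⟩ := hg 0
  obtain ⟨s, hs⟩ := hg 1
  rw [zero_smul, add_zero] at hτ
  have h : linPart g v = (s - τ) • v := by
    rw [one_smul, apply_eq_linPart, map_add] at hs
    rw [apply_eq_linPart] at hτ
    have : linPart g v = (linPart g p + linPart g v + g 0) - (linPart g p + g 0) := by abel
    rw [this, hs, hτ, sub_smul]
    abel
  refine ⟨s - τ, τ, ?_, h, hτ⟩
  have h1 := (linPart g).norm_map v
  rw [h, norm_smul, hv, mul_one, Real.norm_eq_abs] at h1
  exact eq_or_eq_neg_of_abs_eq h1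

theorem exists_unit_parametrization {l : Set (E 3)} (hl : IsLine l) {p : E 3} (hp : p ∈ l) :
    ∃ v : E 3, ‖v‖ = 1 ∧ ∀ x, x ∈ l ↔ ∃ t : ℝ, x = p + t • v := by
  obtain ⟨q, w, hw, rfl⟩ := hl
  obtain ⟨s, rfl⟩ := hp
  have hw' : ‖w‖ ≠ 0 := norm_ne_zero_iff.mpr hw
  refine ⟨‖w‖⁻¹ • w, by rw [norm_smul, norm_inv, norm_norm, inv_mul_cancel₀ hw'], fun x => ?_⟩
  constructor
  · rintro ⟨t, rfl⟩
    refine ⟨(t - s) * ‖w‖, ?_⟩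
    rw [smul_smul, mul_assoc, mul_inv_cancel₀ hw', mul_one, sub_smul]
    abel
  · rintro ⟨t, rfl⟩
    exact ⟨s + t * ‖w‖⁻¹, by rw [smul_smul, add_smul, add_assoc]⟩

/-- Proposition 3.2. Let `Γ` be a 3-crystallographic group and `G ≤ Γ` a
subgroup leaving a line `l` invariant with a dihedral cocompact action on `l` (the action on `l`
is cocompact and some element of `G` acts on `l` as a reflection).  Then `G` is isomorphic to an
amalgamated free product `Gᵃ *_F Gᵇ` for one of the listed triples `(F, Gᵃ, Gᵇ)`. -/
theorem dihedral_action_classification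
    (Γ G : Subgroup (Isom 3)) (hΓ : IsCrystallographic Γ) (hGΓ : G ≤ Γ)
    (l : Set (E 3)) (hl : IsLine l)
    (hinv : ∀ g ∈ G, g '' l = l)
    (hcc : ∃ K : Set (E 3), IsCompact K ∧ K ⊆ l ∧ ∀ x ∈ l, ∃ g ∈ G, g x ∈ K)
    (hrefl : ∃ g ∈ G, ∃ p ∈ l, ∀ x ∈ l, g x = p + p - x) :
    IsAmalgam G PUnit (Zc 2) (Zc 2) ∨
    IsAmalgam G (Zc 2) (Zc 4) (Zc 4) ∨
    IsAmalgam G (Zc 2) (DihedralGroup 2) (Zc 4) ∨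
    IsAmalgam G (Zc 2) (DihedralGroup 2) (DihedralGroup 2) ∨
    IsAmalgam G (Zc 3) (Zc 6) (Zc 6) ∨
    IsAmalgam G (Zc 3) (DihedralGroup 3) (Zc 6) ∨
    IsAmalgam G (Zc 3) (DihedralGroup 3) (DihedralGroup 3) ∨
    IsAmalgam G (Zc 4) (Zc 4 × Zc 2) (Zc 4 × Zc 2) ∨
    IsAmalgam G (Zc 4) (DihedralGroup 4) (Zc 4 × Zc 2) ∨
    IsAmalgam G (Zc 4) (DihedralGroup 4) (DihedralGroup 4) ∨
    IsAmalgam G (Zc 6) (Zc 6 × Zc 2) (Zc 6 × Zc 2) ∨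
    IsAmalgam G (Zc 6) (DihedralGroup 6) (Zc 6 × Zc 2) ∨
    IsAmalgam G (Zc 6) (DihedralGroup 6) (DihedralGroup 6) ∨
    IsAmalgam G (DihedralGroup 2) (DihedralGroup 2 × Zc 2) (DihedralGroup 2 × Zc 2) ∨
    IsAmalgam G (DihedralGroup 2) (DihedralGroup 4) (DihedralGroup 2 × Zc 2) ∨
    IsAmalgam G (DihedralGroup 2) (DihedralGroup 4) (DihedralGroup 4) ∨
    IsAmalgam G (DihedralGroup 3) (DihedralGroup 3 × Zc 2) (DihedralGroup 3 × Zc 2) ∨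
    IsAmalgam G (DihedralGroup 4) (DihedralGroup 4 × Zc 2) (DihedralGroup 4 × Zc 2) ∨
    IsAmalgam G (DihedralGroup 6) (DihedralGroup 6 × Zc 2) (DihedralGroup 6 × Zc 2) := by
  obtain ⟨a, haG, p, hp, hap⟩ := hrefl
  obtain ⟨v, hv, hlv⟩ := exists_unit_parametrization hl hp
  have hv0 : v ≠ 0 := by rintro rfl; simp at hv
  have hline : ∀ g : G, ∀ t : ℝ, ∃ s : ℝ, (g : Isom 3) (p + t • v) = p + s • v := by
    intro g t
    rw [← hlv, ← hinv g g.2]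
    exact ⟨_, (hlv _).mpr ⟨t, rfl⟩, rfl⟩
  choose ε τ hε hεv hτp using fun g : G => exists_sign_translation (g : Isom 3) hv (hline g)
  have hact : ∀ (g : G) (t : ℝ), (g : Isom 3) (p + t • v) = p + (ε g * t + τ g) • v := by
    intro g t
    rw [apply_eq_linPart, map_add, map_smul, hεv, smul_smul, add_right_comm, ← apply_eq_linPart,
      hτp, add_smul, mul_comm]
    abel
  have hsmul : ∀ {s t : ℝ}, s • v = t • v → s = t := fun h => smul_left_injective ℝ hv0 h
  have hεm : ∀ g h, ε (g * h) = ε g * ε h := by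
    intro g h
    apply hsmul
    rw [← hεv, Subgroup.coe_mul, linPart_mul_apply, hεv, map_smul, hεv, smul_smul, mul_comm]
  have hτm : ∀ g h, τ (g * h) = ε g * τ h + τ g := by
    intro g h
    apply hsmul
    apply add_left_cancel (a := p)
    rw [← hτp, Subgroup.coe_mul, IsometryEquiv.mul_apply, hτp h, hact]
  obtain ⟨hε1, hτ1⟩ := sign_translation_one hε hεm hτm
  let N : Subgroup G :=
    { carrier := {g | ε g = 1 ∧ τ g = 0}
      one_mem' := ⟨hε1, hτ1⟩
      mul_mem' := by
        rintro g h ⟨hg, hg'⟩ ⟨hh, hh'⟩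
        exact ⟨by rw [hεm, hg, hh, one_mul], by rw [hτm, hg', hh']; ring⟩
      inv_mem' := by
        rintro g ⟨hg, hg'⟩
        obtain ⟨h1, h2⟩ := sign_translation_inv hε hεm hτm g
        exact ⟨by rw [h1, hg], by rw [h2, hg']; ring⟩ }
  have hN : ∀ g, g ∈ N ↔ ε g = 1 ∧ τ g = 0 := fun g => Iff.rfl
  have : N.Normal := normal_of_sign_translation hε hεm hτm N hN
  have : Finite N := by
    have hfin := hΓ.1 {p} {p} isCompact_singleton isCompact_singleton
    have := hfin.to_subtype
    refine Finite.of_injective (β := {γ : Isom 3 | γ ∈ Γ ∧ (γ '' {p} ∩ {p}).Nonempty})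
      (fun n => ⟨n.1.1, hGΓ n.1.2, p, ⟨p, rfl, ?_⟩, rfl⟩) ?_
    · rw [hτp, n.2.2, zero_smul, add_zero]
    · intro m n h
      exact Subtype.ext (Subtype.ext (by simpa only [Subtype.mk.injEq] using h))
  obtain ⟨J, hJ, hJ'⟩ := exists_complex_orthogonal hv
  obtain ⟨ρ, hρ⟩ := exists_planar_rep (G := G) hJ hJ' fun g =>
    ⟨ε g, by rcases hε g with h | h <;> rw [h] <;> norm_num, hεv g⟩
  have hinj : ∀ n ∈ N, ρ n = 1 → n = 1 := by
    rintro n ⟨hn, hn'⟩ h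
    have hlin : ∀ x, linPart (n : Isom 3) x = x := by
      intro x
      obtain ⟨z, hz⟩ := hJ' _ (inner_sub_inner_smul hv x)
      rw [← sub_add_cancel x (⟪v, x⟫ • v), map_add, map_smul, hεv, hn, one_smul, ← hz, hρ, h]
      rfl
    apply Subtype.ext
    ext1 x
    have h0 := hτp n
    rw [hn', zero_smul, add_zero, apply_eq_linPart, hlin, add_eq_left] at h0
    rw [apply_eq_linPart, hlin, h0, add_zero]
    rfl
  have hord : ∀ g c, ρ g = rotation c → orderOf c ∈ ({1, 2, 3, 4, 6} : Finset ℕ) := by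
    intro g c hc
    obtain ⟨k, hk⟩ := hΓ.exists_int_trace_linPart (hGΓ g.2)
    rw [trace_eq_of_rotation hv hJ _ (hεv g) fun z => by rw [hρ, hc]] at hk
    rcases hε g with h | h <;> rw [h] at hk
    · exact circle_orderOf_mem (k := k - 1) (by push_cast; linarith)
    · exact circle_orderOf_mem (k := k + 1) (by push_cast; linarith)
  have ha' := hap p hp
  rw [add_sub_cancel_right] at ha'
  have hτa : τ ⟨a, haG⟩ = 0 := by
    apply hsmul
    apply add_left_cancel (a := p)
    rw [← hτp, zero_smul, add_zero, ha']
  have hεa : ε ⟨a, haG⟩ = -1 := by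
    have h1 := hact ⟨a, haG⟩ 1
    rw [hτa, mul_one, add_zero] at h1
    change a _ = _ at h1
    rw [hap _ ((hlv _).mpr ⟨1, rfl⟩)] at h1
    apply hsmul
    apply add_left_cancel (a := p)
    rw [← h1]
    module
  have hfinτ : {t : ℝ | (∃ g, τ g = t) ∧ |t| ≤ 1}.Finite := by
    have hfin := hΓ.1 {p} (Metric.closedBall p 1) isCompact_singleton (isCompact_closedBall p 1)
    refine (hfin.image fun γ => ⟪v, γ p - p⟫).subset ?_
    rintro _ ⟨⟨g, rfl⟩, hg⟩
    refine ⟨g, ⟨hGΓ g.2, _, ⟨p, rfl, rfl⟩, ?_⟩, ?_⟩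
    · rw [hτp, mem_closedBall_iff_norm, add_sub_cancel_left, norm_smul, hv, mul_one]
      exact hg
    · change ⟪v, (g : Isom 3) p - p⟫ = τ g
      rw [hτp, add_sub_cancel_left, real_inner_smul_right, real_inner_self_eq_norm_sq, hv]
      ring
  have hccτ : ∃ C : ℝ, ∀ t : ℝ, ∃ g, |ε g * t + τ g| ≤ C := by
    obtain ⟨K, hK, -, h⟩ := hcc
    obtain ⟨C, hC⟩ := hK.isBounded.subset_closedBall p
    refine ⟨C, fun t => ?_⟩
    obtain ⟨g, hg, hgK⟩ := h _ ((hlv _).mpr ⟨t, rfl⟩)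
    refine ⟨⟨g, hg⟩, ?_⟩
    have h1 := hC hgK
    rwa [hact ⟨g, hg⟩ t, mem_closedBall_iff_norm, add_sub_cancel_left, norm_smul, hv, mul_one]
      at h1
  obtain ⟨b, haa, hbb, hk, hG⟩ := exists_second_reflection hε hεm hτm hfinτ hccτ N hN hεa hτa
  exact (isPlanarPointRep_of_injOn hinj hord).classification (exists_generator_rotations hinj)
    haa hbb hk hG
end
end
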